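/- arXiv:2309.07148 — 3 statements merged into one kernel-verified Lean document; each statement's English description precedes it below -/
import Mathlib

section
/- Titchmarsh's convolution theorem: if f, g ∈ L¹[a,b] satisfy (f*g)(t) = 0 for almost every t ∈ [a,b], then there exist λ, μ ≥ 0 with λ + μ ≥ b − a such that f ≡ 0 almost everywhere on [a, a+λ] and g ≡ 0 almost everywhere on [a, a+μ]. -/
open MeasureTheory Set

/-!
If the integrals of `e^{n (c - t)} h(t)`, `n ∈ ℕ`, are bounded, then `h` vanishes before `c`:
expanding `exp (-e^{n (s - t)})` in powers of `e^{n (s - t)}` with `s < c`, all terms but the first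
tend to zero, while the kernel itself tends to the indicator of `t > s`, so `∫_{t ≤ s} h = 0`.

Since the Laplace transform turns convolution into multiplication, it follows that `f` vanishes
before `c` once `f ⋆ f` vanishes before `2 c`. Let `F` and `G` be supported in `[0, ∞)`, with
`F ⋆ G` vanishing before `X`, and let `T` be multiplication by `t`. As `T` is a derivation,
`F ⋆ T G + T F ⋆ G` vanishes before `X` too; multiplying it by `F ⋆ T G` and applying the case of
`f ⋆ f` repeatedly shows that `F ⋆ T G` vanishes before `X`. By induction so does `F ⋆ Tᵏ G`, that
is, for almost every `x < X` all moments of `t ↦ F(x - t) G(t)` are zero, and so is this function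
almost everywhere. By Fubini, `F` vanishes before `X - t` for almost every `t` with `G t ≠ 0`. Hence
if `x ≤ X` is maximal such that `F` vanishes before `x`, then `G` vanishes before `X - x`.
-/

open ContinuousLinearMap (mul)
open Filter Function Topology
open scoped Convolution

lemma hasSum_pow_div_factorial_exp (r : ℝ) :
    HasSum (fun k : ℕ ↦ r ^ k / k.factorial) (Real.exp r) := by
  simpa only [Real.exp_eq_exp_ℝ] using NormedSpace.expSeries_div_hasSum_exp r

section WeightedIntegrals

variable {α E : Type*} {mα : MeasurableSpace α} {μ : Measure α}
  [NormedAddCommGroup E] [NormedSpace ℝ E] {h : α → E} {φ : α → ℝ} {B : ℝ}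

lemma norm_smul_le_of_ne_zero {r : ℝ} {v : E} (hr : v ≠ 0 → ‖r‖ ≤ B) : ‖r • v‖ ≤ B * ‖v‖ := by
  rcases eq_or_ne v 0 with rfl | hv
  · simp
  · rw [norm_smul]
    gcongr
    exact hr hv

lemma integrable_smul_of_bounded_on_support (hh : Integrable h μ)
    (hφ : AEStronglyMeasurable φ μ) (hB : ∀ᵐ x ∂μ, h x ≠ 0 → ‖φ x‖ ≤ B) :
    Integrable (fun x ↦ φ x • h x) μ :=
  (hh.norm.const_mul B).mono' (hφ.smul hh.aestronglyMeasurable)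
    (hB.mono fun _ ↦ norm_smul_le_of_ne_zero)

lemma hasSum_integral_exp_smul (hh : Integrable h μ) (hφ : AEStronglyMeasurable φ μ)
    (hB : ∀ᵐ x ∂μ, h x ≠ 0 → ‖φ x‖ ≤ B) :
    HasSum (fun k : ℕ ↦ ∫ x, (φ x ^ k / k.factorial) • h x ∂μ)
      (∫ x, Real.exp (φ x) • h x ∂μ) := by
  have hasSum_bound (x : α) := (hasSum_pow_div_factorial_exp B).mul_right ‖h x‖
  refine hasSum_integral_of_dominated_convergence (fun k x ↦ B ^ k / k.factorial * ‖h x‖)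
    (fun k ↦ ((hφ.pow k).mul_const _).smul hh.aestronglyMeasurable) (fun k ↦ ?_)
    (.of_forall fun x ↦ (hasSum_bound x).summable) ?_
    (.of_forall fun x ↦ (hasSum_pow_div_factorial_exp (φ x)).smul_const (h x))
  · filter_upwards [hB] with x hx
    refine norm_smul_le_of_ne_zero fun hne ↦ ?_
    rw [norm_div, norm_pow, Real.norm_natCast]
    gcongr
    exact hx hne
  · simpa only [(hasSum_bound _).tsum_eq] using hh.norm.const_mul (Real.exp B)

end WeightedIntegrals

/-- `u` is zero almost everywhere on `(-∞, x)`: the essential support of `u` starts at `x` or later.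
The supports of a convolution and of its factors are compared through this predicate. -/
def VanishesBefore {E : Type*} [Zero E] (u : ℝ → E) (x : ℝ) : Prop :=
  ∀ᵐ t, t < x → u t = 0

namespace VanishesBefore

variable {E : Type*}

lemma mono [Zero E] {u : ℝ → E} {x y : ℝ} (h : VanishesBefore u x) (hyx : y ≤ x) :
    VanishesBefore u y :=
  Eventually.mono h fun _ ht hty ↦ ht (hty.trans_le hyx)

lemma of_forall_lt [Zero E] {u : ℝ → E} {x : ℝ} (h : ∀ y < x, VanishesBefore u y) :
    VanishesBefore u x := by
  obtain ⟨y, -, hyx, hy⟩ := exists_seq_strictMono_tendsto x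
  filter_upwards [ae_all_iff.2 fun n ↦ h (y n) (hyx n)] with t ht htx
  obtain ⟨n, hn⟩ := (hy.eventually_const_lt htx).exists
  exact ht n hn

lemma exists_isGreatest [Zero E] {u : ℝ → E} {a b : ℝ} (hab : a ≤ b) (h : VanishesBefore u a) :
    ∃ x, IsGreatest {x ∈ Icc a b | VanishesBefore u x} x := by
  set s := {x ∈ Icc a b | VanishesBefore u x}
  have ha : a ∈ s := ⟨left_mem_Icc.2 hab, h⟩
  have hb : b ∈ upperBounds s := fun x hx ↦ hx.1.2
  refine ⟨sSup s, ⟨⟨le_csSup ⟨b, hb⟩ ha, csSup_le ⟨a, ha⟩ hb⟩, of_forall_lt fun y hy ↦ ?_⟩,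
    fun x hx ↦ le_csSup ⟨b, hb⟩ hx⟩
  obtain ⟨x, hx, hyx⟩ := exists_lt_of_lt_csSup ⟨a, ha⟩ hy
  exact hx.2.mono hyx.le

lemma of_setIntegral_Iic_eq_zero [NormedAddCommGroup E] [NormedSpace ℝ E] [CompleteSpace E]
    {u : ℝ → E} (hu : Integrable u) {x : ℝ} (h : ∀ s < x, ∫ t in Iic s, u t = 0) :
    VanishesBefore u x := by
  filter_upwards [LocallyIntegrable.ae_hasDerivAt_integral hu.locallyIntegrable] with t ht htx
  have hprim : (fun s ↦ ∫ r in t..s, u r) =ᶠ[𝓝 t] fun _ ↦ 0 := by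
    filter_upwards [gt_mem_nhds htx] with s hs
    rw [← intervalIntegral.integral_Iic_sub_Iic hu.integrableOn hu.integrableOn, h s hs, h t htx,
      sub_zero]
  exact ((ht t).congr_of_eventuallyEq hprim.symm).unique (hasDerivAt_const t 0)

end VanishesBefore

section LaplaceTransform

variable {E : Type*} [NormedAddCommGroup E] [NormedSpace ℝ E] {h : ℝ → E}

lemma tendsto_exp_neg_exp_mul_sub {s t : ℝ} (hts : t ≠ s) :
    Tendsto (fun n : ℕ ↦ Real.exp (-Real.exp (n * (s - t)))) atTop
      (𝓝 ((Ioi s).indicator 1 t)) := by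
  rcases hts.lt_or_gt with hts | hts
  · have hexp : Tendsto (fun n : ℕ ↦ Real.exp (n * (s - t))) atTop atTop :=
      Real.tendsto_exp_atTop.comp
        (tendsto_natCast_atTop_atTop.atTop_mul_const (sub_pos.2 hts))
    rw [indicator_of_notMem (notMem_Ioi.2 hts.le)]
    exact Real.tendsto_exp_neg_atTop_nhds_zero.comp hexp
  · have hexp : Tendsto (fun n : ℕ ↦ Real.exp (n * (s - t))) atTop (𝓝 0) :=
      Real.tendsto_exp_atBot.comp
        (tendsto_natCast_atTop_atTop.atTop_mul_const_of_neg (sub_neg.2 hts))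
    simpa [Function.comp_def, hts] using (Real.continuous_exp.tendsto _).comp hexp.neg

lemma tendsto_integral_exp_neg_exp_smul (hh : Integrable h) (s : ℝ) :
    Tendsto (fun n : ℕ ↦ ∫ t, Real.exp (-Real.exp (n * (s - t))) • h t) atTop
      (𝓝 (∫ t in Ioi s, h t)) := by
  rw [← integral_indicator measurableSet_Ioi]
  refine tendsto_integral_of_dominated_convergence (fun t ↦ ‖h t‖) (fun n ↦ ?_) hh.norm
    (fun n ↦ .of_forall fun t ↦ ?_) ?_
  · exact (by fun_prop : Continuous fun t ↦ Real.exp (-Real.exp (n * (s - t))))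
      |>.aestronglyMeasurable.smul hh.aestronglyMeasurable
  · rw [norm_smul, Real.norm_eq_abs, Real.abs_exp]
    exact mul_le_of_le_one_left (norm_nonneg _)
      (Real.exp_le_one_iff.2 (neg_nonpos.2 (Real.exp_pos _).le))
  · filter_upwards [Measure.ae_ne volume s] with t hts
    convert! (tendsto_exp_neg_exp_mul_sub hts).smul_const (h t) using 2
    by_cases ht : t ∈ Ioi s <;> simp [ht]

/- Expand the outer exponential: the `k`-th term is `(-1)ᵏ e^{-kn(c-s)} / k!` times the `kn`-th
value of the Laplace transform. -/
lemma norm_integral_exp_neg_exp_smul_sub_le (hh : Integrable h) {a c s M : ℝ}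
    (ha : VanishesBefore h a) (hM : ∀ n : ℕ, ‖∫ t, Real.exp (n * (c - t)) • h t‖ ≤ M) (n : ℕ) :
    ‖(∫ t, Real.exp (-Real.exp (n * (s - t))) • h t) - ∫ t, h t‖
      ≤ (Real.exp (Real.exp (n * (s - c))) - 1) * M := by
  set q := Real.exp (n * (s - c))
  have hseries := hasSum_integral_exp_smul hh (φ := fun t ↦ -Real.exp (n * (s - t)))
    (B := Real.exp (n * (s - a))) (by fun_prop) (by
      filter_upwards [ha] with t ht hne
      have hat : a ≤ t := not_lt.1 (mt ht hne)
      rw [norm_neg, Real.norm_eq_abs, Real.abs_exp]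
      gcongr)
  have hseries_tail := (hasSum_nat_add_iff' 1).2 hseries
  have hmajorant_tail := ((hasSum_nat_add_iff' 1).2 (hasSum_pow_div_factorial_exp q)).mul_right M
  simp only [Finset.range_one, Finset.sum_singleton, pow_zero, Nat.factorial_zero, Nat.cast_one,
    div_one, one_smul] at hseries_tail hmajorant_tail
  refine hseries_tail.norm_le_of_bounded hmajorant_tail fun k ↦ ?_
  have hterm (t : ℝ) : ((-Real.exp (n * (s - t))) ^ (k + 1) / (k + 1).factorial) • h t =
      ((-1) ^ (k + 1) * (q ^ (k + 1) / (k + 1).factorial)) •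
        Real.exp (((k + 1) * n : ℕ) * (c - t)) • h t := by
    have hexp : Real.exp (n * (s - t)) ^ (k + 1) =
        q ^ (k + 1) * Real.exp (((k + 1) * n : ℕ) * (c - t)) := by
      rw [← Real.exp_nat_mul, ← Real.exp_nat_mul, ← Real.exp_add]
      congr 1
      push_cast
      ring
    rw [smul_smul, neg_pow, hexp]
    congr 1
    ring
  rw [integral_congr_ae (.of_forall hterm), integral_smul, norm_smul, norm_mul, norm_pow, norm_neg,
    norm_one, one_pow, one_mul, Real.norm_of_nonneg (by positivity)]
  gcongr
  exact hM _

theorem vanishesBefore_of_laplace_bounded [CompleteSpace E] (hh : Integrable h) {a c M : ℝ}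
    (ha : VanishesBefore h a) (hM : ∀ n : ℕ, ‖∫ t, Real.exp (n * (c - t)) • h t‖ ≤ M) :
    VanishesBefore h c := by
  refine .of_setIntegral_Iic_eq_zero hh fun s hs ↦ ?_
  have hq : Tendsto (fun n : ℕ ↦ Real.exp (n * (s - c))) atTop (𝓝 0) :=
    Real.tendsto_exp_atBot.comp
      (tendsto_natCast_atTop_atTop.atTop_mul_const_of_neg (sub_neg.2 hs))
  have hbound : Tendsto (fun n : ℕ ↦ (Real.exp (Real.exp (n * (s - c))) - 1) * M) atTop (𝓝 0) := by
    simpa using ((((Real.continuous_exp.tendsto 0).comp hq).sub_const 1).mul_const M)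
  have hIoi : ∫ t in Ioi s, h t = ∫ t, h t :=
    tendsto_nhds_unique (tendsto_integral_exp_neg_exp_smul hh s) <|
      tendsto_sub_nhds_zero_iff.1 <|
        squeeze_zero_norm (norm_integral_exp_neg_exp_smul_sub_le hh ha hM) hbound
  have hsplit := intervalIntegral.integral_Iic_add_Ioi (b := s) hh.integrableOn hh.integrableOn
  rwa [hIoi, add_eq_right] at hsplit

theorem ae_eq_zero_of_integral_pow_smul_eq_zero [CompleteSpace E] (hh : Integrable h) {B : ℝ}
    (hB : ∀ᵐ t, h t ≠ 0 → |t| ≤ B) (hmoments : ∀ k : ℕ, ∫ t, t ^ k • h t = 0) :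
    h =ᵐ[volume] 0 := by
  have hlaplace (n : ℕ) : ∫ t, Real.exp (-n * t) • h t = 0 := by
    refine (hasSum_integral_exp_smul hh (φ := fun t ↦ -n * t) (B := n * B) (by fun_prop) ?_).unique
      ?_
    · filter_upwards [hB] with t ht hne
      rw [norm_mul, norm_neg, Real.norm_natCast]
      gcongr
      exact ht hne
    · convert hasSum_zero with k
      simp_rw [mul_pow, mul_div_right_comm _ _ (k.factorial : ℝ), mul_smul]
      rw [integral_smul, hmoments, smul_zero]
  have hvanish : VanishesBefore h (B + 1) := by
    refine vanishesBefore_of_laplace_bounded hh (a := -B) (M := 0) ?_ fun n ↦ ?_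
    · filter_upwards [hB] with t ht htB
      by_contra hne
      linarith [neg_abs_le t, ht hne]
    · have hexp (t : ℝ) : Real.exp (n * (B + 1 - t)) =
          Real.exp (n * (B + 1)) * Real.exp (-n * t) := by
        rw [← Real.exp_add]
        ring_nf
      simp_rw [hexp, mul_smul]
      rw [integral_smul, hlaplace, smul_zero, norm_zero]
  filter_upwards [hB, hvanish] with t htB ht
  by_contra hne
  exact hne (ht (by linarith [le_abs_self t, htB hne]))

end LaplaceTransform

lemma ae_ae_eq_zero_swap {α β E : Type*} {mα : MeasurableSpace α} {mβ : MeasurableSpace β}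
    {μ : Measure α} {ν : Measure β} [SFinite μ] [SFinite ν] [TopologicalSpace E]
    [TopologicalSpace.MetrizableSpace E] [Zero E] {f : α × β → E}
    (hf : AEStronglyMeasurable f (μ.prod ν))
    (h : ∀ᵐ x ∂μ, ∀ᵐ y ∂ν, f (x, y) = 0) : ∀ᵐ y ∂ν, ∀ᵐ x ∂μ, f (x, y) = 0 := by
  have hprod : f =ᵐ[μ.prod ν] 0 := by
    refine hf.ae_eq_mk.trans ((Measure.ae_prod_iff_ae_ae
      (hf.stronglyMeasurable_mk.measurableSet_eq_fun stronglyMeasurable_const)).2 ?_)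
    filter_upwards [h, Measure.ae_ae_of_ae_prod hf.ae_eq_mk] with x hfx hmkx
    filter_upwards [hfx, hmkx] with y hfy hmky
    exact hmky.symm.trans hfy
  have hswap : ∀ᵐ p ∂ν.prod μ, f p.swap = 0 :=
    Measure.measurePreserving_swap.quasiMeasurePreserving.ae hprod
  exact Measure.ae_ae_of_ae_prod hswap

section Convolution

variable {𝕜 G : Type*} [RCLike 𝕜] [AddCommGroup G] [MeasurableSpace G] [MeasurableAdd₂ G]
  [MeasurableNeg G] {μ : Measure G} [μ.IsAddLeftInvariant]

lemma convolution_mul_comm [μ.IsNegInvariant] (f g : G → 𝕜) :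
    f ⋆[mul 𝕜 𝕜, μ] g = g ⋆[mul 𝕜 𝕜, μ] f := by
  ext x
  rw [convolution_mul_swap, convolution_mul]
  simp only [mul_comm]

variable [SFinite μ] {f g k l : G → 𝕜}

lemma convolution_mul_assoc_ae (hf : Integrable f μ) (hg : Integrable g μ)
    (hk : Integrable k μ) :
    (f ⋆[mul 𝕜 𝕜, μ] g) ⋆[mul 𝕜 𝕜, μ] k =ᵐ[μ] f ⋆[mul 𝕜 𝕜, μ] (g ⋆[mul 𝕜 𝕜, μ] k) := by
  filter_upwards [hf.norm.ae_convolution_exists (mul ℝ ℝ)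
    (hg.norm.integrable_convolution (mul ℝ ℝ) hk.norm)] with x hx
  exact convolution_assoc _ _ _ _ mul_assoc hf.1 hg.1 hk.1
    (hf.ae_convolution_exists _ hg) (hg.norm.ae_convolution_exists _ hk.norm) hx

lemma convolution_mul_mul_mul_comm_ae [μ.IsNegInvariant] (hf : Integrable f μ)
    (hg : Integrable g μ) (hk : Integrable k μ) (hl : Integrable l μ) :
    (f ⋆[mul 𝕜 𝕜, μ] g) ⋆[mul 𝕜 𝕜, μ] (k ⋆[mul 𝕜 𝕜, μ] l) =ᵐ[μ]
      (f ⋆[mul 𝕜 𝕜, μ] k) ⋆[mul 𝕜 𝕜, μ] (g ⋆[mul 𝕜 𝕜, μ] l) := by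
  have hassoc {f g k l : G → 𝕜} (hf : Integrable f μ) (hg : Integrable g μ) (hk : Integrable k μ)
      (hl : Integrable l μ) :
      (f ⋆[mul 𝕜 𝕜, μ] g) ⋆[mul 𝕜 𝕜, μ] (k ⋆[mul 𝕜 𝕜, μ] l) =ᵐ[μ]
        f ⋆[mul 𝕜 𝕜, μ] ((g ⋆[mul 𝕜 𝕜, μ] k) ⋆[mul 𝕜 𝕜, μ] l) :=
    (convolution_mul_assoc_ae hf hg (hk.integrable_convolution _ hl)).trans <| .of_eq <|
      convolution_congr _ .rfl (convolution_mul_assoc_ae hg hk hl).symm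
  exact (hassoc hf hg hk hl).trans
    (by rw [convolution_mul_comm g k]; exact (hassoc hf hk hg hl).symm)

lemma convolution_mul_add_ae {f' : G → 𝕜} (hf : Integrable f μ) (hf' : Integrable f' μ)
    (hg : Integrable g μ) :
    (f + f') ⋆[mul 𝕜 𝕜, μ] g =ᵐ[μ] f ⋆[mul 𝕜 𝕜, μ] g + f' ⋆[mul 𝕜 𝕜, μ] g := by
  filter_upwards [hf.ae_convolution_exists (mul 𝕜 𝕜) hg, hf'.ae_convolution_exists (mul 𝕜 𝕜) hg]
    with x hx hx'
  exact hx.add_distrib hx'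

end Convolution

section SupportOfConvolution

variable {𝕜 : Type*} [RCLike 𝕜] {f g : ℝ → 𝕜} {a b c : ℝ}

lemma VanishesBefore.convolution (hf : VanishesBefore f a) (hg : VanishesBefore g b) :
    VanishesBefore (f ⋆[mul 𝕜 𝕜] g) (a + b) := by
  refine .of_forall fun x hx ↦ integral_eq_zero_of_ae ?_
  filter_upwards [hf, (Measure.measurePreserving_sub_left volume x).quasiMeasurePreserving.ae hg]
    with t hft hgt
  rcases lt_or_ge t a with hta | hta
  · simp [hft hta]
  · simp [hgt (by linarith)]

lemma convolution_exp_smul (r a b : ℝ) (f g : ℝ → 𝕜) (x : ℝ) :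
    ((fun t ↦ Real.exp (r * (a - t)) • f t) ⋆[mul 𝕜 𝕜] fun t ↦ Real.exp (r * (b - t)) • g t) x =
      Real.exp (r * (a + b - x)) • (f ⋆[mul 𝕜 𝕜] g) x := by
  rw [convolution_mul, convolution_mul, ← integral_smul]
  congr 1 with t
  have hexp : Real.exp (r * (a + b - x)) =
      Real.exp (r * (a - t)) * Real.exp (r * (b - (x - t))) := by
    rw [← Real.exp_add]
    ring_nf
  rw [hexp, smul_mul_smul_comm]

/- With `k(t) = e^{n(c-t)} f(t)`, the integral of `k` squares to that of
`k ⋆ k = e^{n(2c-t)} (f ⋆ f)(t)`, and the last exponential is at most `1` where `f ⋆ f ≠ 0`. -/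
theorem vanishesBefore_of_convolution_self (hf : Integrable f) (ha : VanishesBefore f a)
    (hc : VanishesBefore (f ⋆[mul 𝕜 𝕜] f) (2 * c)) : VanishesBefore f c := by
  refine vanishesBefore_of_laplace_bounded hf ha (M := √(∫ t, ‖(f ⋆[mul 𝕜 𝕜] f) t‖)) fun n ↦ ?_
  set k : ℝ → 𝕜 := fun t ↦ Real.exp (n * (c - t)) • f t
  have hk : Integrable k := by
    refine integrable_smul_of_bounded_on_support (B := Real.exp (n * (c - a))) hf (by fun_prop) ?_
    filter_upwards [ha] with t ht hne
    have hat : a ≤ t := not_lt.1 (mt ht hne)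
    rw [Real.norm_eq_abs, Real.abs_exp]
    gcongr
  refine Real.le_sqrt_of_sq_le ?_
  calc ‖∫ t, k t‖ ^ 2 = ‖∫ t, (k ⋆[mul 𝕜 𝕜] k) t‖ := by
        rw [integral_convolution _ hk hk, ContinuousLinearMap.mul_apply', norm_mul, sq]
    _ ≤ ∫ t, ‖(k ⋆[mul 𝕜 𝕜] k) t‖ := norm_integral_le_integral_norm _
    _ ≤ ∫ t, ‖(f ⋆[mul 𝕜 𝕜] f) t‖ := by
        refine integral_mono_ae (hk.integrable_convolution _ hk).norm
          (hf.integrable_convolution _ hf).norm ?_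
        filter_upwards [hc] with t ht
        simp only [k, convolution_exp_smul, norm_smul, Real.norm_eq_abs, Real.abs_exp]
        rcases lt_or_ge t (2 * c) with htc | htc
        · simp [ht htc]
        · refine mul_le_of_le_one_left (norm_nonneg _) (Real.exp_le_one_iff.2 ?_)
          exact mul_nonpos_of_nonneg_of_nonpos n.cast_nonneg (by linarith)

end SupportOfConvolution

/-- Multiplication of a function by the coordinate, the operator `(T F)(t) = t F(t)`. It is a
derivation for convolution. -/
def coordMul {E : Type*} [SMul ℝ E] (F : ℝ → E) : ℝ → E :=
  fun t ↦ t • F t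

/-- Integrable functions supported in `[0, R]`, a class stable under multiplication by the
coordinate. The support condition holds everywhere, not only almost everywhere. -/
structure IntegrableSupportedOn {E : Type*} [NormedAddCommGroup E] (R : ℝ) (F : ℝ → E) : Prop where
  integrable : Integrable F
  support_subset : support F ⊆ Icc 0 R

namespace IntegrableSupportedOn

variable {E : Type*} [NormedAddCommGroup E] {F : ℝ → E} {R : ℝ}

lemma vanishesBefore_zero (hF : IntegrableSupportedOn R F) : VanishesBefore F 0 :=
  .of_forall fun _ ht ↦ by_contra fun hne ↦ ht.not_ge (hF.support_subset hne).1

lemma abs_le (hF : IntegrableSupportedOn R F) {t : ℝ} (ht : F t ≠ 0) : |t| ≤ R := by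
  rw [abs_of_nonneg (hF.support_subset ht).1]
  exact (hF.support_subset ht).2

variable [NormedSpace ℝ E]

lemma coordMul (hF : IntegrableSupportedOn R F) : IntegrableSupportedOn R (coordMul F) where
  integrable := integrable_smul_of_bounded_on_support hF.integrable (φ := id) (by fun_prop)
    (.of_forall fun _ ↦ hF.abs_le)
  support_subset := (support_smul_subset_right _ F).trans hF.support_subset

lemma coordMul_iterate (hF : IntegrableSupportedOn R F) (n : ℕ) :
    IntegrableSupportedOn R (_root_.coordMul^[n] F) := by
  induction n with
  | zero => exact hF
  | succ n ih => simpa only [iterate_succ_apply'] using ih.coordMul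

end IntegrableSupportedOn

lemma coordMul_iterate_apply {E : Type*} [MulAction ℝ E] (F : ℝ → E) (n : ℕ) (t : ℝ) :
    coordMul^[n] F t = t ^ n • F t := by
  induction n with
  | zero => simp
  | succ n ih => rw [iterate_succ_apply', coordMul, ih, smul_smul, pow_succ']

lemma VanishesBefore.coordMul {E : Type*} [Zero E] [SMulZeroClass ℝ E] {u : ℝ → E} {x : ℝ}
    (h : VanishesBefore u x) : VanishesBefore (coordMul u) x :=
  Eventually.mono h fun t ht htx ↦ by rw [_root_.coordMul, ht htx, smul_zero]

section Titchmarsh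

variable {𝕜 : Type*} [RCLike 𝕜] {F G : ℝ → 𝕜} {R S X : ℝ}

lemma coordMul_convolution_ae (hF : IntegrableSupportedOn R F) (hG : IntegrableSupportedOn S G) :
    coordMul (F ⋆[mul 𝕜 𝕜] G) =ᵐ[volume]
      F ⋆[mul 𝕜 𝕜] coordMul G + coordMul F ⋆[mul 𝕜 𝕜] G := by
  filter_upwards [hF.integrable.ae_convolution_exists (mul 𝕜 𝕜) hG.coordMul.integrable,
    hF.coordMul.integrable.ae_convolution_exists (mul 𝕜 𝕜) hG.integrable] with x hx hx'
  rw [Pi.add_apply, convolution_def, convolution_def, ← integral_add hx hx', coordMul,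
    convolution_def, ← integral_smul]
  congr 1 with t
  simp only [ContinuousLinearMap.mul_apply', coordMul, mul_smul_comm, smul_mul_assoc, ← add_smul,
    sub_add_cancel]

/- Write `T` for `coordMul`. Multiplying `T (F ⋆ G) = F ⋆ T G + T F ⋆ G` by `F ⋆ T G` gives
`(F ⋆ T G) ⋆ (F ⋆ T G) = T (F ⋆ G) ⋆ (F ⋆ T G) - (F ⋆ G) ⋆ (T F ⋆ T G)`,
whose right-hand side vanishes before `x + y`. -/
lemma vanishesBefore_convolution_coordMul_midpoint (hF : IntegrableSupportedOn R F)
    (hG : IntegrableSupportedOn S G) {x y : ℝ} (hx : VanishesBefore (F ⋆[mul 𝕜 𝕜] G) x)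
    (hy : VanishesBefore (F ⋆[mul 𝕜 𝕜] coordMul G) y)
    (hy' : VanishesBefore (coordMul F ⋆[mul 𝕜 𝕜] coordMul G) y) :
    VanishesBefore (F ⋆[mul 𝕜 𝕜] coordMul G) ((x + y) / 2) := by
  set A := F ⋆[mul 𝕜 𝕜] coordMul G
  set B := coordMul F ⋆[mul 𝕜 𝕜] G
  have hA : Integrable A := hF.integrable.integrable_convolution _ hG.coordMul.integrable
  have hB : Integrable B := hF.coordMul.integrable.integrable_convolution _ hG.integrable
  have hleibniz : A ⋆[mul 𝕜 𝕜] A + B ⋆[mul 𝕜 𝕜] A =ᵐ[volume]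
      coordMul (F ⋆[mul 𝕜 𝕜] G) ⋆[mul 𝕜 𝕜] A :=
    (convolution_mul_add_ae hA hB hA).symm.trans <| .of_eq <|
      convolution_congr _ (coordMul_convolution_ae hF hG).symm .rfl
  have hBA : B ⋆[mul 𝕜 𝕜] A =ᵐ[volume]
      (F ⋆[mul 𝕜 𝕜] G) ⋆[mul 𝕜 𝕜] (coordMul F ⋆[mul 𝕜 𝕜] coordMul G) := by
    rw [convolution_mul_comm F G, show B = _ from convolution_mul_comm _ _]
    exact convolution_mul_mul_mul_comm_ae hG.integrable hF.coordMul.integrable hF.integrable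
      hG.coordMul.integrable
  have hAA : VanishesBefore (A ⋆[mul 𝕜 𝕜] A) (2 * ((x + y) / 2)) := by
    rw [mul_div_cancel₀ _ two_ne_zero]
    filter_upwards [hleibniz, hBA, hx.coordMul.convolution hy, hx.convolution hy']
      with t hsum hBt hTt hFGt ht
    rwa [Pi.add_apply, hBt, hFGt ht, hTt ht, add_zero] at hsum
  exact vanishesBefore_of_convolution_self hA
    (hF.vanishesBefore_zero.convolution hG.coordMul.vanishesBefore_zero) hAA

/- If the claim holds with a factor `c ∈ [0, 1]` for all `F`, `G`, two applications show that
`T F ⋆ T G` vanishes before `c² X`, so it also holds with the factor `(1 + c²) / 2`; starting from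
`c = 0`, `n` steps give at least `n / (n + 2)`. -/
lemma vanishesBefore_convolution_coordMul_fraction (hX : 0 ≤ X) (n : ℕ)
    (hF : IntegrableSupportedOn R F) (hG : IntegrableSupportedOn S G)
    (h : VanishesBefore (F ⋆[mul 𝕜 𝕜] G) X) :
    VanishesBefore (F ⋆[mul 𝕜 𝕜] coordMul G) (n / (n + 2) * X) := by
  induction n generalizing F G R S X with
  | zero => simpa using hF.vanishesBefore_zero.convolution hG.coordMul.vanishesBefore_zero
  | succ n ih =>
    set c : ℝ := n / (n + 2)
    have hc : 0 ≤ c := by positivity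
    have hc1 : c ≤ 1 := div_le_one_of_le₀ (by linarith) (by positivity)
    have hFTG : VanishesBefore (F ⋆[mul 𝕜 𝕜] coordMul G) (c * X) := ih hX hF hG h
    have hTFTG : VanishesBefore (coordMul F ⋆[mul 𝕜 𝕜] coordMul G) (c * (c * X)) := by
      rw [convolution_mul_comm] at hFTG ⊢
      exact ih (mul_nonneg hc hX) hG.coordMul hF hFTG
    refine (vanishesBefore_convolution_coordMul_midpoint hF hG h
      (hFTG.mono (mul_le_of_le_one_left (mul_nonneg hc hX) hc1)) hTFTG).mono ?_
    have hstep : ((n + 1 : ℕ) : ℝ) / ((n + 1 : ℕ) + 2) ≤ (1 + c * c) / 2 := by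
      simp only [c]
      push_cast
      rw [div_mul_div_comm, one_add_div (by positivity), div_div,
        div_le_div_iff₀ (by positivity) (by positivity)]
      nlinarith [n.cast_nonneg (α := ℝ)]
    calc _ ≤ (1 + c * c) / 2 * X := by gcongr
      _ = (X + c * (c * X)) / 2 := by ring

theorem vanishesBefore_convolution_coordMul (hF : IntegrableSupportedOn R F)
    (hG : IntegrableSupportedOn S G) (h : VanishesBefore (F ⋆[mul 𝕜 𝕜] G) X) :
    VanishesBefore (F ⋆[mul 𝕜 𝕜] coordMul G) X := by
  rcases lt_or_ge X 0 with hX | hX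
  · refine (hF.vanishesBefore_zero.convolution hG.coordMul.vanishesBefore_zero).mono ?_
    simpa using hX.le
  refine .of_forall_lt fun y hy ↦ ?_
  have hlim : Tendsto (fun n : ℕ ↦ (n : ℝ) / (n + 2) * X) atTop (𝓝 X) := by
    simpa using (tendsto_natCast_div_add_atTop (2 : ℝ)).mul_const X
  obtain ⟨n, hn⟩ := (hlim.eventually_const_lt hy).exists
  exact (vanishesBefore_convolution_coordMul_fraction hX n hF hG h).mono hn.le

lemma vanishesBefore_convolution_coordMul_iterate (hF : IntegrableSupportedOn R F)
    (hG : IntegrableSupportedOn S G) (h : VanishesBefore (F ⋆[mul 𝕜 𝕜] G) X) (n : ℕ) :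
    VanishesBefore (F ⋆[mul 𝕜 𝕜] (coordMul^[n] G)) X := by
  induction n with
  | zero => exact h
  | succ n ih =>
    simpa only [iterate_succ_apply'] using
      vanishesBefore_convolution_coordMul hF (hG.coordMul_iterate n) ih

lemma ae_ae_mul_eq_zero_of_convolution (hF : IntegrableSupportedOn R F)
    (hG : IntegrableSupportedOn S G) (h : VanishesBefore (F ⋆[mul 𝕜 𝕜] G) X) :
    ∀ᵐ x ∂volume.restrict (Iio X), ∀ᵐ t, G t * F (x - t) = 0 := by
  rw [ae_restrict_iff' measurableSet_Iio]
  filter_upwards [ae_all_iff.2 (vanishesBefore_convolution_coordMul_iterate hF hG h),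
    hG.integrable.ae_convolution_exists (mul 𝕜 𝕜) hF.integrable] with x hmoments hint hxX
  refine ae_eq_zero_of_integral_pow_smul_eq_zero hint (B := S)
    (.of_forall fun t ht ↦ hG.abs_le (left_ne_zero_of_mul ht)) fun k ↦ ?_
  rw [← hmoments k hxX, convolution_mul_comm, convolution_mul]
  simp only [coordMul_iterate_apply, smul_mul_assoc]

lemma ae_vanishesBefore_sub_of_convolution (hF : IntegrableSupportedOn R F)
    (hG : IntegrableSupportedOn S G) (h : VanishesBefore (F ⋆[mul 𝕜 𝕜] G) X) :
    ∀ᵐ t, G t ≠ 0 → VanishesBefore F (X - t) := by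
  have hmeas : AEStronglyMeasurable (fun p : ℝ × ℝ ↦ G p.2 * F (p.1 - p.2))
      ((volume.restrict (Iio X)).prod volume) :=
    (hG.integrable.aestronglyMeasurable.convolution_integrand (mul 𝕜 𝕜)
      hF.integrable.aestronglyMeasurable).mono_ac
        (Measure.AbsolutelyContinuous.prod Measure.restrict_le_self.absolutelyContinuous .rfl)
  filter_upwards [ae_ae_eq_zero_swap hmeas (ae_ae_mul_eq_zero_of_convolution hF hG h)]
    with t ht hGt
  rw [ae_restrict_iff' measurableSet_Iio] at ht
  filter_upwards [(measurePreserving_add_right volume t).quasiMeasurePreserving.ae ht]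
    with s hs hst
  simpa [hGt] using hs (lt_sub_iff_add_lt.1 hst)

theorem exists_vanishesBefore_of_convolution (hX : 0 ≤ X) (hF : IntegrableSupportedOn R F)
    (hG : IntegrableSupportedOn S G) (h : VanishesBefore (F ⋆[mul 𝕜 𝕜] G) X) :
    ∃ x ∈ Icc 0 X, VanishesBefore F x ∧ VanishesBefore G (X - x) := by
  obtain ⟨x, ⟨hx, hFx⟩, hmax⟩ := hF.vanishesBefore_zero.exists_isGreatest hX
  refine ⟨x, hx, hFx, ?_⟩
  filter_upwards [ae_vanishesBefore_sub_of_convolution hF hG h] with t ht htx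
  by_contra hGt
  have ht0 : 0 ≤ t := (hG.support_subset hGt).1
  linarith [hmax ⟨⟨by linarith [hx.1], by linarith⟩, ht hGt⟩]

end Titchmarsh

/-- The restriction of `f` to `[a, b]`, translated to start at the origin and extended by zero.
It turns convolution with base point `a` into convolution on `ℝ`. -/
noncomputable def originExtension {E : Type*} [Zero E] (a b : ℝ) (f : ℝ → E) : ℝ → E :=
  (Icc 0 (b - a)).indicator fun t ↦ f (t + a)

section OriginExtension

variable {E : Type*} [NormedAddCommGroup E] {a b : ℝ} {f : ℝ → E}

lemma integrableSupportedOn_originExtension (hf : IntegrableOn f (Icc a b)) :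
    IntegrableSupportedOn (b - a) (originExtension a b f) where
  integrable := by
    have hcomp := (hf.integrable_indicator measurableSet_Icc).comp_add_right a
    convert hcomp using 2 with t
    simp [originExtension, indicator, le_sub_iff_add_le]
  support_subset := support_indicator_subset

lemma ae_eq_zero_of_vanishesBefore_originExtension {l : ℝ} (hl : l ≤ b - a)
    (h : VanishesBefore (originExtension a b f) l) :
    ∀ᵐ t ∂volume.restrict (Icc a (a + l)), f t = 0 := by
  rw [← restrict_Ico_eq_restrict_Icc, ae_restrict_iff' measurableSet_Ico]
  filter_upwards [(measurePreserving_sub_right volume a).quasiMeasurePreserving.ae h] with t ht hmem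
  have hmem' : t - a ∈ Icc 0 (b - a) := ⟨by linarith [hmem.1], by linarith [hmem.2]⟩
  have hzero := ht (by linarith [hmem.2])
  rwa [originExtension, indicator_of_mem hmem', sub_add_cancel] at hzero

lemma convolution_originExtension {𝕜 : Type*} [RCLike 𝕜] (f g : ℝ → 𝕜) {x : ℝ}
    (hx : x ≤ b - a) :
    (originExtension a b f ⋆[mul 𝕜 𝕜] originExtension a b g) x =
      ∫ s in Icc a (x + a), f (x + a - s + a) * g s := by
  rw [convolution_mul_swap, ← integral_indicator measurableSet_Icc,
    ← integral_add_right_eq_self ((Icc a (x + a)).indicator fun s ↦ f (x + a - s + a) * g s) a]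
  congr 1 with s
  have hmem : s + a ∈ Icc a (x + a) ↔ x - s ∈ Icc 0 (b - a) ∧ s ∈ Icc 0 (b - a) := by
    simp only [mem_Icc]
    constructor
    · rintro ⟨_, _⟩
      refine ⟨⟨?_, ?_⟩, ?_, ?_⟩ <;> linarith
    · rintro ⟨⟨_, _⟩, _, _⟩
      constructor <;> linarith
  have hshift : x + a - (s + a) + a = x - s + a := by ring
  simp only [originExtension, indicator_apply, hmem, hshift, ite_and, ite_zero_mul_ite_zero]

lemma vanishesBefore_convolution_originExtension {𝕜 : Type*} [RCLike 𝕜] {f g : ℝ → 𝕜}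
    (hconv : ∀ᵐ t ∂volume.restrict (Icc a b), ∫ s in a..t, f (t - s + a) * g s = 0) :
    VanishesBefore (originExtension a b f ⋆[mul 𝕜 𝕜] originExtension a b g) (b - a) := by
  rw [ae_restrict_iff' measurableSet_Icc] at hconv
  filter_upwards [(measurePreserving_add_right volume a).quasiMeasurePreserving.ae hconv]
    with x hx hxb
  rw [convolution_originExtension f g hxb.le]
  rcases lt_or_ge x 0 with hx0 | hx0
  · simp [hx0]
  · rw [integral_Icc_eq_integral_Ioc, ← intervalIntegral.integral_of_le (by linarith)]
    exact hx ⟨by linarith, by linarith⟩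

end OriginExtension

theorem titchmarsh_general {𝕜 : Type*} [RCLike 𝕜] (a b : ℝ) (hab : a ≤ b) (f g : ℝ → 𝕜)
    (hf : IntegrableOn f (Icc a b)) (hg : IntegrableOn g (Icc a b))
    (hconv : ∀ᵐ t ∂(volume.restrict (Icc a b)), (∫ s in a..t, f (t - s + a) * g s) = 0) :
    ∃ lam mu : ℝ, 0 ≤ lam ∧ 0 ≤ mu ∧ b - a ≤ lam + mu ∧
      (∀ᵐ t ∂(volume.restrict (Icc a (a + lam))), f t = 0) ∧
      (∀ᵐ t ∂(volume.restrict (Icc a (a + mu))), g t = 0) := by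
  obtain ⟨x, hx, hfx, hgx⟩ := exists_vanishesBefore_of_convolution (sub_nonneg.2 hab)
    (integrableSupportedOn_originExtension hf) (integrableSupportedOn_originExtension hg)
    (vanishesBefore_convolution_originExtension hconv)
  exact ⟨x, b - a - x, hx.1, sub_nonneg.2 hx.2, (add_sub_cancel _ _).ge,
    ae_eq_zero_of_vanishesBefore_originExtension hx.2 hfx,
    ae_eq_zero_of_vanishesBefore_originExtension (sub_le_self _ hx.1) hgx⟩

theorem titchmarsh (a b : ℝ) (hab : a ≤ b) (f g : ℝ → ℝ)
    (hf : IntegrableOn f (Icc a b)) (hg : IntegrableOn g (Icc a b))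
    (hconv : ∀ᵐ t ∂(volume.restrict (Icc a b)), (∫ s in a..t, f (t - s + a) * g s) = 0) :
    ∃ lam mu : ℝ, 0 ≤ lam ∧ 0 ≤ mu ∧ b - a ≤ lam + mu ∧
      (∀ᵐ t ∂(volume.restrict (Icc a (a + lam))), f t = 0) ∧
      (∀ᵐ t ∂(volume.restrict (Icc a (a + mu))), g t = 0) :=
  titchmarsh_general a b hab f g hf hg hconv
end

section
/- If g ∈ L¹[a,b] is not almost-everywhere zero on any interval [a, a+ε] with ε > 0, then the convolution operator C_a(g) : L¹[a,b] → L¹[a,b], defined by (C_a(g) f)(t) = ∫_a^t g(t−s+a) f(s) ds, is injective. -/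
open MeasureTheory Set

/-- Convolution operator with kernel `g` and base point `a`. -/
noncomputable def convOp (a : ℝ) (g f : ℝ → ℝ) (t : ℝ) : ℝ :=
  ∫ s in a..t, g (t - s + a) * f s

/-!
Write `L f` for the Laplace transform of a compactly supported `f`. Mikusiński's integrals
`∫ t, exp (-exp (n * (x - t))) * f t` tend to `∫ t in Ioi x, f t`, while their expansions are series
in the numbers `L f (n * k)`; hence `f` vanishes below `c` if and only if
`L f n = O(exp (-c n))` over the natural numbers `n`.

Multiplication by `t` is a derivation of the convolution algebra. With `F, G, F', G'` the transforms
of `f, g, t f, t g` this gives `(G F')² = G F' · (F' G + F G') - F G · F' G'`, so the lower ends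
`rₙ` of the supports of the convolutions of consecutive terms of `f, g, t f, t g, t² f, …` satisfy
`rₙ + min rₙ₊₁ rₙ₊₂ ≤ 2 rₙ₊₁`. These numbers are bounded below, and a single strict descent would
force linear descent forever, so they increase. Consequently, if `f ⋆ g` vanishes below `T`, so does
`(tᵏ f) ⋆ g` for every `k`: for almost every `t < T` all moments of `s ↦ f s * g (t - s)` are zero,
hence `f s * g (t - s) = 0` for almost every `s`, which is Titchmarsh's theorem.
-/

open Filter Asymptotics Real
open ContinuousLinearMap (mul)
open scoped Topology Convolution Nat

/-- The function `f` vanishes almost everywhere on `(-∞, c)`, i.e. `c ≤ inf supp f`. -/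
def VanishesBelow (f : ℝ → ℝ) (c : ℝ) : Prop :=
  ∀ᵐ t, t < c → f t = 0

/-- Integrable functions on the line with compact support, the functions whose Laplace transform
converges everywhere and whose class is stable under multiplication by polynomials. -/
structure CompactlyIntegrable (f : ℝ → ℝ) : Prop where
  integrable : Integrable f
  hasCompactSupport : HasCompactSupport f

/-- The two-sided Laplace transform at a real argument. Its decay at infinity detects where the
support of a compactly supported function begins. -/
noncomputable def laplace (f : ℝ → ℝ) (x : ℝ) : ℝ :=
  ∫ t, exp (-(x * t)) * f t

theorem VanishesBelow.mono {f : ℝ → ℝ} {c d : ℝ} (hf : VanishesBelow f d) (hcd : c ≤ d) :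
    VanishesBelow f c :=
  Eventually.mono hf fun _ ht htc => ht (htc.trans_le hcd)

theorem VanishesBelow.of_forall_lt {f : ℝ → ℝ} {c : ℝ} (hf : ∀ d < c, VanishesBelow f d) :
    VanishesBelow f c := by
  have hrat : ∀ᵐ t : ℝ, ∀ q : ℚ, (q : ℝ) < c → t < q → f t = 0 :=
    ae_all_iff.2 fun q => eventually_imp_distrib_left.2 (hf q)
  filter_upwards [hrat] with t ht htc
  obtain ⟨q, htq, hqc⟩ := exists_rat_btwn htc
  exact ht q hqc htq

theorem VanishesBelow.id_mul {f : ℝ → ℝ} {c : ℝ} (hf : VanishesBelow f c) :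
    VanishesBelow (id * f) c := by
  filter_upwards [hf] with t ht htc
  rw [Pi.mul_apply, ht htc, mul_zero]

theorem integral_neg_exp_pow_div_factorial (f : ℝ → ℝ) (x l : ℝ) (k : ℕ) :
    ∫ t, (-exp (l * (x - t))) ^ k / k ! * f t =
      (-1) ^ k / k ! * exp (x * (l * k)) * laplace f (l * k) := by
  rw [laplace, ← integral_const_mul]
  congr 1 with t
  have hexp : exp (l * (x - t)) ^ k = exp (x * (l * k)) * exp (-(l * k * t)) := by
    rw [← exp_nat_mul, ← exp_add]
    ring_nf
  rw [neg_pow, hexp]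
  ring

namespace CompactlyIntegrable

variable {f g w : ℝ → ℝ}

theorem continuous_mul (hf : CompactlyIntegrable f) (hw : Continuous w) :
    CompactlyIntegrable fun t => w t * f t where
  integrable := by
    have hon : IntegrableOn (fun t => w t * f t) (tsupport f) :=
      hf.integrable.integrableOn.continuousOn_mul hw.continuousOn hf.hasCompactSupport
    exact (integrableOn_iff_integrable_of_support_subset
      ((Function.support_mul_subset_right w f).trans (subset_tsupport f))).1 hon
  hasCompactSupport := hf.hasCompactSupport.mul_left

theorem convolution (hf : CompactlyIntegrable f) (hg : CompactlyIntegrable g) :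
    CompactlyIntegrable (f ⋆[mul ℝ ℝ] g) where
  integrable := hf.integrable.integrable_convolution (mul ℝ ℝ) hg.integrable
  hasCompactSupport := hf.hasCompactSupport.convolution (mul ℝ ℝ) hg.hasCompactSupport

theorem id_mul (hf : CompactlyIntegrable f) : CompactlyIntegrable (id * f) :=
  hf.continuous_mul continuous_id

theorem hasSum_integral_pow_div_factorial (hf : CompactlyIntegrable f) (hw : Continuous w) :
    HasSum (fun k : ℕ => ∫ t, w t ^ k / k ! * f t) (∫ t, exp (w t) * f t) := by
  have hexp (y z : ℝ) : HasSum (fun k : ℕ => y ^ k / k ! * z) (exp y * z) := by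
    rw [Real.exp_eq_exp_ℝ]
    exact (NormedSpace.expSeries_div_hasSum_exp y).mul_right z
  refine hasSum_integral_of_dominated_convergence (fun k t => |w t| ^ k / k ! * |f t|)
    (fun k => (hf.continuous_mul (by fun_prop)).integrable.aestronglyMeasurable)
    (fun k => .of_forall fun t => ?_) (.of_forall fun t => (hexp _ _).summable) ?_
    (.of_forall fun t => hexp _ _)
  · simp
  · simp only [(hexp _ _).tsum_eq]
    have hint := (hf.continuous_mul (w := fun t => exp |w t|) (by fun_prop)).integrable.abs
    simpa only [abs_mul, abs_exp] using hint

theorem abs_integral_exp_neg_exp_sub_one_le (hf : CompactlyIntegrable f) {c C : ℝ}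
    (hC : ∀ n : ℕ, |laplace f n| ≤ C * exp (-(c * n))) (x : ℝ) (n : ℕ) :
    |∫ t, (exp (-exp (n * (x - t))) - 1) * f t| ≤ C * (exp (exp (n * (x - c))) - 1) := by
  have hlhs := (hasSum_nat_add_iff' 1).2 <|
    hf.hasSum_integral_pow_div_factorial (w := fun t => -exp (n * (x - t))) (by fun_prop)
  have hrhs : HasSum (fun k : ℕ => C * (exp (n * (x - c)) ^ (k + 1) / (k + 1)!))
      (C * (exp (exp (n * (x - c))) - 1)) := by
    rw [Real.exp_eq_exp_ℝ]
    simpa using ((hasSum_nat_add_iff' 1).2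
      (NormedSpace.expSeries_div_hasSum_exp (NormedSpace.exp (n * (x - c))))).mul_left C
  have hsub : ∫ t, (exp (-exp (n * (x - t))) - 1) * f t =
      (∫ t, exp (-exp (n * (x - t))) * f t) - ∫ t, f t := by
    simp only [sub_mul, one_mul]
    exact integral_sub (hf.continuous_mul (by fun_prop)).integrable hf.integrable
  rw [hsub]
  simp only [Finset.sum_range_one, pow_zero, Nat.factorial_zero, Nat.cast_one, div_one,
    one_mul] at hlhs
  refine hlhs.norm_le_of_bounded hrhs fun k => ?_
  have hk := hC (n * (k + 1))
  push_cast at hk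
  rw [integral_neg_exp_pow_div_factorial, norm_eq_abs, abs_mul, abs_mul, abs_div,
    abs_neg_one_pow, abs_exp, Nat.abs_cast, Nat.cast_succ]
  calc
    _ ≤ 1 / ((k + 1)! : ℝ) * exp (x * (n * (k + 1))) * (C * exp (-(c * (n * (k + 1))))) := by
      gcongr
    _ = C * (exp (x * (n * (k + 1)) + -(c * (n * (k + 1)))) / (k + 1)!) := by
      rw [exp_add]; ring
    _ = C * (exp (n * (x - c)) ^ (k + 1) / (k + 1)!) := by
      rw [← exp_nat_mul]; push_cast; ring_nf

theorem tendsto_integral_exp_neg_exp_sub_one (hf : CompactlyIntegrable f) (x : ℝ) :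
    Tendsto (fun n : ℕ => ∫ t, (exp (-exp (n * (x - t))) - 1) * f t) atTop
      (𝓝 (-∫ t in Iic x, f t)) := by
  rw [← integral_indicator measurableSet_Iic, ← integral_neg]
  refine tendsto_integral_of_dominated_convergence (fun t => |f t|)
    (fun n => (hf.continuous_mul (by fun_prop)).integrable.aestronglyMeasurable)
    hf.integrable.abs (fun n => .of_forall fun t => ?_) ?_
  · rw [norm_mul, norm_eq_abs, norm_eq_abs]
    refine mul_le_of_le_one_left (abs_nonneg _) (abs_le.2 ⟨?_, ?_⟩)
    · linarith [exp_pos (-exp (n * (x - t)))]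
    · linarith [exp_le_one_iff.2 (neg_nonpos.2 (exp_pos (n * (x - t))).le)]
  · filter_upwards [Measure.ae_ne volume x] with t htx
    rcases htx.lt_or_gt with htx | hxt
    · have hinner : Tendsto (fun n : ℕ => exp (n * (x - t))) atTop atTop :=
        tendsto_exp_atTop.comp (tendsto_natCast_atTop_atTop.atTop_mul_const (sub_pos.2 htx))
      simpa [htx.le] using
        ((tendsto_exp_neg_atTop_nhds_zero.comp hinner).sub_const 1).mul_const (f t)
    · have hinner : Tendsto (fun n : ℕ => exp (n * (x - t))) atTop (𝓝 0) :=
        tendsto_exp_atBot.comp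
          (tendsto_natCast_atTop_atTop.atTop_mul_const_of_neg (sub_neg.2 hxt))
      simpa [hxt] using
        (((continuous_exp.tendsto _).comp hinner.neg).sub_const 1).mul_const (f t)

theorem setIntegral_Iic_eq_zero (hf : CompactlyIntegrable f) {c x : ℝ} (hx : x < c)
    (h : (fun n : ℕ => laplace f n) =O[atTop] fun n : ℕ => exp (-(c * n))) :
    ∫ t in Iic x, f t = 0 := by
  obtain ⟨C, hC⟩ := (isBigO_nat_atTop_iff fun n hn => absurd hn (exp_ne_zero _)).1 h
  simp only [norm_eq_abs, abs_exp] at hC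
  have hinner : Tendsto (fun n : ℕ => exp (n * (x - c))) atTop (𝓝 0) :=
    tendsto_exp_atBot.comp (tendsto_natCast_atTop_atTop.atTop_mul_const_of_neg (sub_neg.2 hx))
  have hbound : Tendsto (fun n : ℕ => C * (exp (exp (n * (x - c))) - 1)) atTop (𝓝 0) := by
    simpa using (((continuous_exp.tendsto _).comp hinner).sub_const 1).const_mul C
  have hzero : Tendsto (fun n : ℕ => ∫ t, (exp (-exp (n * (x - t))) - 1) * f t) atTop (𝓝 0) :=
    squeeze_zero_norm (fun n => hf.abs_integral_exp_neg_exp_sub_one_le hC x n) hbound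
  exact neg_eq_zero.1 (tendsto_nhds_unique (hf.tendsto_integral_exp_neg_exp_sub_one x) hzero)

end CompactlyIntegrable

theorem VanishesBelow.of_forall_setIntegral_Iic_eq_zero {f : ℝ → ℝ} (hf : Integrable f) {c : ℝ}
    (h : ∀ x < c, ∫ t in Iic x, f t = 0) : VanishesBelow f c := by
  filter_upwards [LocallyIntegrable.ae_hasDerivAt_integral hf.locallyIntegrable] with x hderiv hxc
  have hprim : (fun y => ∫ t in x..y, f t) =ᶠ[𝓝 x] fun _ => 0 := by
    filter_upwards [Iio_mem_nhds hxc] with y hyc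
    rw [← intervalIntegral.integral_Iic_sub_Iic hf.integrableOn hf.integrableOn, h x hxc, h y hyc,
      sub_zero]
  exact (hderiv x).unique ((hasDerivAt_const x 0).congr_of_eventuallyEq hprim)


namespace CompactlyIntegrable

variable {f g : ℝ → ℝ}

theorem vanishesBelow_iff_isBigO_laplace (hf : CompactlyIntegrable f) {c : ℝ} :
    VanishesBelow f c ↔ (fun n : ℕ => laplace f n) =O[atTop] fun n : ℕ => exp (-(c * n)) := by
  refine ⟨fun h => .of_bound (∫ t, |f t|) (.of_forall fun n => ?_), fun h =>
    .of_forall_setIntegral_Iic_eq_zero hf.integrable fun x hx => hf.setIntegral_Iic_eq_zero hx h⟩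
  rw [norm_eq_abs (exp _), abs_exp, ← integral_mul_const]
  refine norm_integral_le_of_norm_le (hf.integrable.abs.mul_const _) ?_
  filter_upwards [h] with t ht
  rcases lt_or_ge t c with htc | hct
  · simp [ht htc]
  · rw [norm_mul, norm_eq_abs, norm_eq_abs, abs_exp, mul_comm]
    have : c * n ≤ n * t := by rw [mul_comm]; gcongr
    gcongr

theorem laplace_convolution (hf : CompactlyIntegrable f) (hg : CompactlyIntegrable g) (x : ℝ) :
    laplace (f ⋆[mul ℝ ℝ] g) x = laplace f x * laplace g x := by
  have hexp : Continuous fun t : ℝ => exp (-(x * t)) := by fun_prop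
  have hconv := integral_convolution (mul ℝ ℝ) (μ := volume) (ν := volume)
    (hf.continuous_mul hexp).integrable (hg.continuous_mul hexp).integrable
  rw [ContinuousLinearMap.mul_apply'] at hconv
  rw [laplace, laplace, laplace, ← hconv]
  congr 1 with t
  rw [convolution_mul, convolution_mul, ← integral_const_mul]
  congr 1 with s
  rw [show -(x * t) = -(x * s) + -(x * (t - s)) by ring, exp_add]
  ring

theorem id_mul_convolution (hf : CompactlyIntegrable f) (hg : CompactlyIntegrable g) :
    id * (f ⋆[mul ℝ ℝ] g) =ᵐ[volume] (id * f) ⋆[mul ℝ ℝ] g + f ⋆[mul ℝ ℝ] (id * g) := by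
  filter_upwards [hf.id_mul.integrable.ae_convolution_exists (mul ℝ ℝ) hg.integrable,
    hf.integrable.ae_convolution_exists (mul ℝ ℝ) hg.id_mul.integrable] with t hfg hfg'
  rw [Pi.add_apply, Pi.mul_apply, convolution_mul, convolution_mul, convolution_mul,
    ← integral_const_mul]
  refine Eq.trans ?_ (integral_add hfg hfg')
  congr 1 with s
  simp only [Pi.mul_apply, id_eq]
  ring

theorem laplace_id_mul_convolution (hf : CompactlyIntegrable f) (hg : CompactlyIntegrable g)
    (x : ℝ) :
    laplace (id * (f ⋆[mul ℝ ℝ] g)) x =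
      laplace (id * f) x * laplace g x + laplace f x * laplace (id * g) x := by
  have hexp : Continuous fun t : ℝ => exp (-(x * t)) := by fun_prop
  rw [← hf.id_mul.laplace_convolution hg, ← hf.laplace_convolution hg.id_mul, laplace, laplace,
    laplace, ← integral_add ((hf.id_mul.convolution hg).continuous_mul hexp).integrable
      ((hf.convolution hg.id_mul).continuous_mul hexp).integrable]
  refine integral_congr_ae ?_
  filter_upwards [hf.id_mul_convolution hg] with t ht
  rw [ht, Pi.add_apply, mul_add]

theorem vanishesBelow_convolution (hf : CompactlyIntegrable f) (hg : CompactlyIntegrable g)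
    {c d : ℝ} (hfc : VanishesBelow f c) (hgd : VanishesBelow g d) :
    VanishesBelow (f ⋆[mul ℝ ℝ] g) (c + d) := by
  rw [(hf.convolution hg).vanishesBelow_iff_isBigO_laplace]
  simp only [hf.laplace_convolution hg, add_mul, neg_add, exp_add]
  exact (hf.vanishesBelow_iff_isBigO_laplace.1 hfc).mul (hg.vanishesBelow_iff_isBigO_laplace.1 hgd)

theorem exists_vanishesBelow (hf : CompactlyIntegrable f) : ∃ c, VanishesBelow f c := by
  obtain ⟨c, hc⟩ := hf.hasCompactSupport.isCompact.bddBelow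
  exact ⟨c, .of_forall fun t ht => image_eq_zero_of_notMem_tsupport fun h => ht.not_ge (hc h)⟩

theorem vanishesBelow_convolution_id_mul (hf : CompactlyIntegrable f)
    (hg : CompactlyIntegrable g) {c d : ℝ} (hfg : VanishesBelow (f ⋆[mul ℝ ℝ] g) c)
    (hgf : VanishesBelow (g ⋆[mul ℝ ℝ] (id * f)) d)
    (hfg' : VanishesBelow ((id * f) ⋆[mul ℝ ℝ] (id * g)) d) :
    VanishesBelow (g ⋆[mul ℝ ℝ] (id * f)) ((c + d) / 2) := by
  have hderiv := hfg.id_mul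
  rw [(hf.convolution hg).vanishesBelow_iff_isBigO_laplace] at hfg
  rw [(hf.convolution hg).id_mul.vanishesBelow_iff_isBigO_laplace] at hderiv
  rw [(hf.id_mul.convolution hg.id_mul).vanishesBelow_iff_isBigO_laplace] at hfg'
  rw [(hg.convolution hf.id_mul).vanishesBelow_iff_isBigO_laplace] at hgf ⊢
  have hsq (n : ℕ) : laplace (g ⋆[mul ℝ ℝ] (id * f)) n * laplace (id * (f ⋆[mul ℝ ℝ] g)) n -
      laplace ((id * f) ⋆[mul ℝ ℝ] (id * g)) n * laplace (f ⋆[mul ℝ ℝ] g) n =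
        laplace (g ⋆[mul ℝ ℝ] (id * f)) n ^ 2 := by
    rw [hf.laplace_convolution hg, hf.id_mul.laplace_convolution hg.id_mul,
      hg.laplace_convolution hf.id_mul, hf.laplace_id_mul_convolution hg]
    ring
  have hexp (n : ℕ) : exp (-(d * n)) * exp (-(c * n)) = exp (-((c + d) / 2 * n)) ^ 2 := by
    rw [← exp_add, ← exp_nat_mul]
    push_cast
    ring_nf
  exact IsBigO.of_pow two_ne_zero (((hgf.mul hderiv).sub (hfg'.mul hfg)).congr hsq hexp)

end CompactlyIntegrable

/-- The infimum of the essential support of `f`, truncated at `T` so that the supremum defining it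
is over a bounded set even if `f = 0` almost everywhere. -/
noncomputable def lowerEnd (T : ℝ) (f : ℝ → ℝ) : ℝ :=
  sSup {c | c ≤ T ∧ VanishesBelow f c}

theorem le_lowerEnd {T c : ℝ} {f : ℝ → ℝ} (hcT : c ≤ T) (hf : VanishesBelow f c) :
    c ≤ lowerEnd T f :=
  le_csSup ⟨T, fun _ hd => hd.1⟩ ⟨hcT, hf⟩

namespace CompactlyIntegrable

variable {T : ℝ} {f g : ℝ → ℝ}

theorem nonempty_le_and_vanishesBelow (hf : CompactlyIntegrable f) (T : ℝ) :
    {c | c ≤ T ∧ VanishesBelow f c}.Nonempty :=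
  let ⟨c, hc⟩ := hf.exists_vanishesBelow
  ⟨min c T, min_le_right c T, hc.mono (min_le_left c T)⟩

theorem lowerEnd_le (hf : CompactlyIntegrable f) : lowerEnd T f ≤ T :=
  csSup_le (hf.nonempty_le_and_vanishesBelow T) fun _ hc => hc.1

theorem vanishesBelow_lowerEnd (hf : CompactlyIntegrable f) :
    VanishesBelow f (lowerEnd T f) :=
  .of_forall_lt fun _ hd =>
    let ⟨_, hc, hdc⟩ := exists_lt_of_lt_csSup (hf.nonempty_le_and_vanishesBelow T) hd
    hc.2.mono hdc.le

theorem lowerEnd_convolution_add_min_le (hf : CompactlyIntegrable f)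
    (hg : CompactlyIntegrable g) :
    lowerEnd T (f ⋆[mul ℝ ℝ] g) + min (lowerEnd T (g ⋆[mul ℝ ℝ] (id * f)))
        (lowerEnd T ((id * f) ⋆[mul ℝ ℝ] (id * g))) ≤
      2 * lowerEnd T (g ⋆[mul ℝ ℝ] (id * f)) := by
  set d := min (lowerEnd T (g ⋆[mul ℝ ℝ] (id * f))) (lowerEnd T ((id * f) ⋆[mul ℝ ℝ] (id * g)))
  have hd₁ : d ≤ lowerEnd T (g ⋆[mul ℝ ℝ] (id * f)) := min_le_left _ _
  have hd₂ : d ≤ lowerEnd T ((id * f) ⋆[mul ℝ ℝ] (id * g)) := min_le_right _ _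
  have hfg := hf.convolution hg
  have hgf := hg.convolution hf.id_mul
  have hfg' := hf.id_mul.convolution hg.id_mul
  have hvanish := hf.vanishesBelow_convolution_id_mul hg (hfg.vanishesBelow_lowerEnd (T := T))
    (hgf.vanishesBelow_lowerEnd.mono hd₁) (hfg'.vanishesBelow_lowerEnd.mono hd₂)
  have hdT : d ≤ T := hd₁.trans hgf.lowerEnd_le
  have hle := le_lowerEnd (T := T) (by linarith [hfg.lowerEnd_le (T := T)]) hvanish
  linarith

end CompactlyIntegrable

theorem monotone_of_add_min_le_two_mul {R : Type*} [Field R] [LinearOrder R]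
    [IsStrictOrderedRing R] [Archimedean R] {r : ℕ → R} (hr : BddBelow (range r))
    (hstep : ∀ n, r n + min (r (n + 1)) (r (n + 2)) ≤ 2 * r (n + 1)) : Monotone r := by
  obtain ⟨m, hm⟩ := hr
  refine monotone_nat_of_le_succ fun n => le_of_not_gt fun hn => ?_
  have hdecr (k : ℕ) : r n - r (n + 1) ≤ r (n + k) - r (n + k + 1) := by
    induction k with
    | zero => rfl
    | succ k ih =>
      rw [← add_assoc]
      rcases min_cases (r (n + k + 1)) (r (n + k + 2)) with ⟨hmin, -⟩ | ⟨hmin, -⟩ <;>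
        linarith [hstep (n + k)]
  have hlinear (k : ℕ) : r (n + k) ≤ r n - k * (r n - r (n + 1)) := by
    induction k with
    | zero => simp
    | succ k ih =>
      rw [← add_assoc]
      push_cast
      linarith [hdecr k]
  obtain ⟨k, hk⟩ := exists_nat_gt ((r n - m) / (r n - r (n + 1)))
  rw [div_lt_iff₀ (sub_pos.2 hn)] at hk
  linarith [hlinear k, hm (mem_range_self (n + k))]

/-- The sequence `f, g, t f, t g, t² f, t² g, …`, arranged so that each convolution of consecutive
terms is compared with the next two. -/
def zigzag (f g : ℝ → ℝ) : ℕ → ℝ → ℝ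
  | 0 => f
  | 1 => g
  | n + 2 => id * zigzag f g n

theorem VanishesBelow.zigzag {f g : ℝ → ℝ} {c : ℝ} (hf : VanishesBelow f c)
    (hg : VanishesBelow g c) (n : ℕ) : VanishesBelow (zigzag f g n) c := by
  induction n using Nat.twoStepInduction with
  | zero => exact hf
  | one => exact hg
  | more n ih _ => exact ih.id_mul

namespace CompactlyIntegrable

variable {f g : ℝ → ℝ} {T : ℝ}

protected theorem zigzag (hf : CompactlyIntegrable f) (hg : CompactlyIntegrable g) (n : ℕ) :
    CompactlyIntegrable (zigzag f g n) := by
  induction n using Nat.twoStepInduction with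
  | zero => exact hf
  | one => exact hg
  | more n ih _ => exact ih.id_mul

theorem bddBelow_lowerEnd_convolution_zigzag (hf : CompactlyIntegrable f)
    (hg : CompactlyIntegrable g) (T : ℝ) :
    BddBelow (range fun n =>
      lowerEnd T (zigzag f g n ⋆[mul ℝ ℝ] zigzag f g (n + 1))) := by
  obtain ⟨c, hc⟩ := hf.exists_vanishesBelow
  obtain ⟨d, hd⟩ := hg.exists_vanishesBelow
  have hm := (hc.mono (min_le_left c d)).zigzag (hd.mono (min_le_right c d))
  refine ⟨min (min c d + min c d) T, forall_mem_range.2 fun n => le_lowerEnd (min_le_right _ _) ?_⟩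
  exact ((hf.zigzag hg n).vanishesBelow_convolution (hf.zigzag hg (n + 1)) (hm n) (hm (n + 1))).mono
    (min_le_left _ _)

theorem vanishesBelow_id_mul_convolution (hf : CompactlyIntegrable f)
    (hg : CompactlyIntegrable g) (h : VanishesBelow (f ⋆[mul ℝ ℝ] g) T) :
    VanishesBelow ((id * f) ⋆[mul ℝ ℝ] g) T := by
  have hmono : Monotone fun n =>
      lowerEnd T (zigzag f g n ⋆[mul ℝ ℝ] zigzag f g (n + 1)) :=
    monotone_of_add_min_le_two_mul (hf.bddBelow_lowerEnd_convolution_zigzag hg T)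
      fun n => (hf.zigzag hg n).lowerEnd_convolution_add_min_le (hf.zigzag hg (n + 1))
  have hT : T ≤ lowerEnd T (g ⋆[mul ℝ ℝ] (id * f)) := by
    have h01 := hmono (zero_le_one' ℕ)
    exact (le_lowerEnd le_rfl h).trans h01
  have hcomm : (id * f) ⋆[mul ℝ ℝ] g = g ⋆[mul ℝ ℝ] (id * f) := by
    ext t
    rw [convolution_mul, convolution_mul_swap]
    simp only [mul_comm]
  rw [hcomm]
  exact (hg.convolution hf.id_mul).vanishesBelow_lowerEnd.mono hT

theorem vanishesBelow_id_pow_mul_convolution (hf : CompactlyIntegrable f)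
    (hg : CompactlyIntegrable g) (h : VanishesBelow (f ⋆[mul ℝ ℝ] g) T) (k : ℕ) :
    VanishesBelow ((id ^ k * f) ⋆[mul ℝ ℝ] g) T := by
  induction k with
  | zero => simpa using h
  | succ k ih =>
    rw [pow_succ', mul_assoc]
    exact (hf.continuous_mul (continuous_pow k)).vanishesBelow_id_mul_convolution hg ih

theorem ae_eq_zero_of_forall_integral_pow_mul_eq_zero (hf : CompactlyIntegrable f)
    (h : ∀ k : ℕ, ∫ t, t ^ k * f t = 0) : ∀ᵐ t, f t = 0 := by
  have hlaplace (x : ℝ) : laplace f x = 0 := by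
    refine (hf.hasSum_integral_pow_div_factorial (w := fun t => -(x * t)) (by fun_prop)).unique ?_
    convert hasSum_zero using 2 with k
    calc
      ∫ t, (-(x * t)) ^ k / k ! * f t = ∫ t, (-x) ^ k / k ! * (t ^ k * f t) := by
        congr 1 with t
        ring
      _ = 0 := by rw [integral_const_mul, h k, mul_zero]
  have hvanish (c : ℕ) : VanishesBelow f c := by
    simpa only [hf.vanishesBelow_iff_isBigO_laplace, hlaplace] using isBigO_zero _ _
  filter_upwards [ae_all_iff.2 hvanish] with t ht
  obtain ⟨c, hc⟩ := exists_nat_gt t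
  exact ht c hc

theorem ae_ae_mul_sub_eq_zero (hf : CompactlyIntegrable f) (hg : CompactlyIntegrable g)
    (h : VanishesBelow (f ⋆[mul ℝ ℝ] g) T) :
    ∀ᵐ t, t < T → ∀ᵐ s, f s * g (t - s) = 0 := by
  filter_upwards [ae_all_iff.2 (hf.vanishesBelow_id_pow_mul_convolution hg h),
    hf.integrable.ae_convolution_exists (mul ℝ ℝ) hg.integrable] with t hmoment hint htT
  have hfg : CompactlyIntegrable fun s => f s * g (t - s) :=
    ⟨hint, hf.hasCompactSupport.mul_right⟩
  refine hfg.ae_eq_zero_of_forall_integral_pow_mul_eq_zero fun k => ?_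
  simpa only [convolution_mul, Pi.mul_apply, Pi.pow_apply, id_eq, mul_assoc] using hmoment k htT

theorem ae_mul_eq_zero_of_vanishesBelow_convolution (hf : CompactlyIntegrable f)
    (hg : CompactlyIntegrable g) (h : VanishesBelow (f ⋆[mul ℝ ℝ] g) T) :
    ∀ᵐ p : ℝ × ℝ, p.1 + p.2 < T → f p.2 * g p.1 = 0 := by
  set H : ℝ × ℝ → ℝ := {p | p.1 < T}.indicator fun p => |f p.2 * g (p.1 - p.2)| with hH
  have hHint : Integrable H :=
    (hf.integrable.convolution_integrand (mul ℝ ℝ) hg.integrable).abs.indicator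
      (measurableSet_lt measurable_fst measurable_const)
  have hHzero : ∫ p, H p = 0 := by
    rw [Measure.volume_eq_prod, integral_prod H hHint]
    refine integral_eq_zero_of_ae ?_
    filter_upwards [hf.ae_ae_mul_sub_eq_zero hg h] with t ht
    refine integral_eq_zero_of_ae ?_
    rcases lt_or_ge t T with htT | hTt
    · filter_upwards [ht htT] with s hs
      simp only [hH, indicator, hs, abs_zero, ite_self, Pi.zero_apply]
    · exact .of_forall fun s => if_neg hTt.not_gt
  have hae := (integral_eq_zero_iff_of_nonneg
    (fun p => indicator_nonneg (fun _ _ => abs_nonneg _) p) hHint).1 hHzero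
  have hshear :=
    (measurePreserving_add_prod (volume : Measure ℝ) volume).quasiMeasurePreserving.ae hae
  filter_upwards [hshear] with p hp hpT
  simpa [hH, hpT] using hp

theorem vanishesBelow_of_convolution (hf : CompactlyIntegrable f) (hg : CompactlyIntegrable g)
    {c d : ℝ} (h : VanishesBelow (f ⋆[mul ℝ ℝ] g) (c + d))
    (hgd : ∀ ε > 0, ¬ VanishesBelow g (d + ε)) : VanishesBelow f c := by
  refine .of_forall_lt fun c' hc' => ?_
  have hprod := Measure.ae_ae_of_ae_prod (hf.ae_mul_eq_zero_of_vanishesBelow_convolution hg h)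
  obtain ⟨v, hgv, hv⟩ := (not_eventually.1 (hgd (c - c') (sub_pos.2 hc'))).and_eventually hprod
    |>.exists
  rw [Classical.not_imp] at hgv
  filter_upwards [hv] with u hu huc
  exact (mul_eq_zero.1 (hu (by linarith [hgv.1]))).resolve_right hgv.2

end CompactlyIntegrable

theorem sub_convolution_ae_eq {f₁ f₂ g : ℝ → ℝ} (hf₁ : Integrable f₁) (hf₂ : Integrable f₂)
    (hg : Integrable g) :
    (f₁ - f₂) ⋆[mul ℝ ℝ] g =ᵐ[volume] f₁ ⋆[mul ℝ ℝ] g - f₂ ⋆[mul ℝ ℝ] g := by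
  filter_upwards [hf₁.ae_convolution_exists (mul ℝ ℝ) hg,
    hf₂.ae_convolution_exists (mul ℝ ℝ) hg] with x hx₁ hx₂
  rw [convolution_mul]
  simp only [Pi.sub_apply, sub_mul]
  exact integral_sub hx₁ hx₂

section ConvOp

variable {a b : ℝ} {f g : ℝ → ℝ}

theorem compactlyIntegrable_indicator_Icc (hf : IntegrableOn f (Icc a b)) :
    CompactlyIntegrable ((Icc a b).indicator f) where
  integrable := hf.integrable_indicator measurableSet_Icc
  hasCompactSupport := .intro isCompact_Icc fun _ ht => indicator_of_notMem ht f

theorem vanishesBelow_indicator_Icc (a b : ℝ) (f : ℝ → ℝ) :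
    VanishesBelow ((Icc a b).indicator f) a :=
  .of_forall fun _ ht => indicator_of_notMem (fun h => ht.not_ge h.1) f

theorem convOp_eq_convolution_indicator (g f : ℝ → ℝ) {t : ℝ} (ht : t ∈ Icc a b) :
    convOp a g f t = ((Icc a b).indicator f ⋆[mul ℝ ℝ] (Icc a b).indicator g) (t + a) := by
  rw [convOp, intervalIntegral.integral_of_le ht.1, ← integral_Icc_eq_integral_Ioc,
    ← integral_indicator measurableSet_Icc, convolution_mul]
  congr 1 with s
  by_cases hs : s ∈ Icc a t
  · have hsb : s ∈ Icc a b := ⟨hs.1, hs.2.trans ht.2⟩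
    have hts : t + a - s ∈ Icc a b := ⟨by linarith [hs.2], by linarith [hs.1, ht.2]⟩
    rw [indicator_of_mem hs, indicator_of_mem hsb, indicator_of_mem hts, mul_comm,
      sub_add_eq_add_sub]
  · rw [indicator_of_notMem hs]
    by_cases hsa : a ≤ s
    · have hts : t + a - s ∉ Icc a b := fun h => hs ⟨hsa, by linarith [h.1]⟩
      rw [indicator_of_notMem hts, mul_zero]
    · rw [indicator_of_notMem (fun h => hsa h.1), zero_mul]

theorem not_vanishesBelow_indicator_Icc (hab : a < b)
    (hg : ∀ ε > 0, ¬ ∀ᵐ t ∂volume.restrict (Icc a (a + ε)), g t = 0) {ε : ℝ} (hε : 0 < ε) :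
    ¬ VanishesBelow ((Icc a b).indicator g) (a + ε) := by
  intro h
  have hδ : 0 < min (ε / 2) (b - a) := lt_min (half_pos hε) (sub_pos.2 hab)
  refine hg _ hδ ((ae_restrict_iff' measurableSet_Icc).2 ?_)
  filter_upwards [h] with t ht htI
  rw [← ht (by linarith [htI.2, min_le_left (ε / 2) (b - a)]), indicator_of_mem]
  exact ⟨htI.1, by linarith [htI.2, min_le_right (ε / 2) (b - a)]⟩

theorem vanishesBelow_convolution_indicator_sub {f₁ f₂ : ℝ → ℝ} (hg : IntegrableOn g (Icc a b))
    (hf₁ : IntegrableOn f₁ (Icc a b)) (hf₂ : IntegrableOn f₂ (Icc a b))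
    (heq : ∀ᵐ t ∂volume.restrict (Icc a b), convOp a g f₁ t = convOp a g f₂ t) :
    VanishesBelow ((Icc a b).indicator (f₁ - f₂) ⋆[mul ℝ ℝ] (Icc a b).indicator g) (b + a) := by
  have hG := compactlyIntegrable_indicator_Icc hg
  have hlow := (compactlyIntegrable_indicator_Icc (hf₁.sub hf₂)).vanishesBelow_convolution hG
    (vanishesBelow_indicator_Icc a b _) (vanishesBelow_indicator_Icc a b _)
  have hsub := sub_convolution_ae_eq (compactlyIntegrable_indicator_Icc hf₁).integrable
    (compactlyIntegrable_indicator_Icc hf₂).integrable hG.integrable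
  have hshift := (measurePreserving_sub_right volume a).quasiMeasurePreserving.ae
    ((ae_restrict_iff' measurableSet_Icc).1 heq)
  filter_upwards [hlow, hsub, hshift] with x hxlow hxsub hxeq hxb
  rcases lt_or_ge x (a + a) with hxa | hax
  · exact hxlow hxa
  · have hxI : x - a ∈ Icc a b := ⟨by linarith, by linarith⟩
    have hconv := hxeq hxI
    rw [convOp_eq_convolution_indicator g f₁ hxI, convOp_eq_convolution_indicator g f₂ hxI,
      sub_add_cancel] at hconv
    rw [indicator_sub', hxsub, Pi.sub_apply, hconv, sub_self]

end ConvOp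

theorem convOp_injective (a b : ℝ) (hab : a ≤ b) (g : ℝ → ℝ)
    (hg : IntegrableOn g (Icc a b))
    (hnontriv : ∀ ε > 0, ¬ (∀ᵐ t ∂(volume.restrict (Icc a (a + ε))), g t = 0))
    (f₁ f₂ : ℝ → ℝ) (hf₁ : IntegrableOn f₁ (Icc a b)) (hf₂ : IntegrableOn f₂ (Icc a b))
    (heq : ∀ᵐ t ∂(volume.restrict (Icc a b)), convOp a g f₁ t = convOp a g f₂ t) :
    ∀ᵐ t ∂(volume.restrict (Icc a b)), f₁ t = f₂ t := by
  rw [ae_restrict_iff' measurableSet_Icc]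
  rcases hab.eq_or_lt with rfl | hab
  · filter_upwards [Measure.ae_ne volume a] with t hta ht
    exact absurd (le_antisymm ht.2 ht.1) hta
  · have hsub : VanishesBelow ((Icc a b).indicator (f₁ - f₂)) b :=
      (compactlyIntegrable_indicator_Icc (hf₁.sub hf₂)).vanishesBelow_of_convolution
        (compactlyIntegrable_indicator_Icc hg)
        (vanishesBelow_convolution_indicator_sub hg hf₁ hf₂ heq)
        fun _ hε => not_vanishesBelow_indicator_Icc hab hnontriv hε
    filter_upwards [hsub, Measure.ae_ne volume b] with t ht htb htI
    have hzero := ht (lt_of_le_of_ne htI.2 htb)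
    rwa [indicator_of_mem htI, Pi.sub_apply, sub_eq_zero] at hzero
end

section
/- Suppose a family (J^α)_{α>0} of bounded linear operators on L¹[a,b] satisfies: (1) J¹ is the ordinary integral operator (J¹f)(t) = ∫_a^t f(s) ds; (2) the index law J^α ∘ J^β = J^{α+β} for all α,β > 0; (3) α ↦ J^α is continuous from (0,∞) to B(L¹[a,b]) with the operator norm; and (4) each J^α is a convolution operator, i.e., J^α = C_a(k_α) for some kernel k_α ∈ L¹[a,b]. Then J^α = I_{a⁺}^{α} for all α > 0, i.e., the family is the Riemann–Liouville fractional integral. -/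
open MeasureTheory Set

/-- Riemann–Liouville fractional integral of order `α` with base point `a`. -/
noncomputable def RL (a α : ℝ) (f : ℝ → ℝ) (t : ℝ) : ℝ :=
  ∫ s in a..t, (t - s) ^ (α - 1) / Real.Gamma α * f s

/-!
Laplace transforms of functions truncated to `[a, b]`, with `a` as origin, turn truncated
convolution into multiplication up to an error `O(exp (-τ x))` for every `τ < b - a`. In this sense
the transforms `K α` of the kernels satisfy `K α * K β = K (α + β)` and `K 1 = x⁻¹`. Each `K α` is
the square of `K (α / 2)`, hence asymptotically nonnegative, so its square determines it; therefore
`K α = x ^ (-α)` for dyadic `α`.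

The transform modulo such errors determines the function. Suppose that the transform `L` of `g` is
`O(exp (-σ x))` and `τ - a < σ`, and expand `∫ exp (-exp (x * (τ - t))) * g t` by the exponential
series in terms of the values `L (n * x)`. As `x → ∞` all terms but the zeroth vanish, so the
integral tends to `∫ g`; but it also tends to the integral of `g` over `t > τ`. Hence at dyadic `α`
the kernel is the Riemann–Liouville kernel, and continuity in `α` of the image of the constant
function `1` gives the remaining orders.
-/

open Filter Topology Asymptotics

section Asymptotics

/-- `F` grows more slowly than every exponential `exp (ε x)`, `ε > 0`, as `x → ∞`. -/
def Subexponential (F : ℝ → ℝ) : Prop :=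
  ∀ ε > 0, F =O[atTop] fun x => Real.exp (ε * x)

/-- `F` and `G` agree modulo `O(exp (-τ x))` for every `τ < T`. For Laplace transforms of functions
on a half-line this is blindness to everything that lies at distance `T` or more from the
endpoint. -/
def EqModExp (T : ℝ) (F G : ℝ → ℝ) : Prop :=
  ∀ τ < T, (F - G) =O[atTop] fun x => Real.exp (-(τ * x))

lemma subexponential_rpow (s : ℝ) : Subexponential fun x => x ^ s := fun _ hε =>
  (isLittleO_rpow_exp_pos_mul_atTop s hε).isBigO

lemma subexponential_inv_rpow (s : ℝ) : Subexponential (fun x => x ^ s)⁻¹ := by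
  intro ε hε
  refine (subexponential_rpow (-s) ε hε).congr' ?_ EventuallyEq.rfl
  filter_upwards [eventually_ge_atTop 0] with x hx
  exact Real.rpow_neg hx s

lemma Subexponential.mul {F G : ℝ → ℝ} (hF : Subexponential F) (hG : Subexponential G) :
    Subexponential (F * G) := by
  intro ε hε
  refine ((hF (ε / 2) (half_pos hε)).mul (hG (ε / 2) (half_pos hε))).congr_right fun x => ?_
  rw [← Real.exp_add]
  ring_nf

namespace EqModExp

variable {T : ℝ} {F F' G G' H L : ℝ → ℝ}

lemma of_eventuallyEq (h : F =ᶠ[atTop] G) : EqModExp T F G := by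
  intro τ _
  refine (isBigO_zero _ _).congr' ?_ EventuallyEq.rfl
  filter_upwards [h] with x hx
  simp [hx]

lemma symm (h : EqModExp T F G) : EqModExp T G F := fun τ hτ =>
  (h τ hτ).neg_left.congr_left fun x => by simp

lemma trans (h : EqModExp T F G) (h' : EqModExp T G H) : EqModExp T F H := fun τ hτ =>
  ((h τ hτ).add (h' τ hτ)).congr_left fun x => by simp

instance : Trans (EqModExp T) (EqModExp T) (EqModExp T) := ⟨trans⟩

lemma mul_right (h : EqModExp T F G) (hH : Subexponential H) : EqModExp T (F * H) (G * H) := by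
  intro τ hτ
  refine ((h ((τ + T) / 2) (by linarith)).mul (hH ((T - τ) / 2) (by linarith))).congr
    (fun x => by simp [sub_mul]) fun x => ?_
  rw [← Real.exp_add]
  ring_nf

lemma mul_left (h : EqModExp T F G) (hH : Subexponential H) : EqModExp T (H * F) (H * G) := by
  simpa only [mul_comm H] using h.mul_right hH

lemma mul (h : EqModExp T F F') (h' : EqModExp T G G') (hF' : Subexponential F')
    (hG : Subexponential G) : EqModExp T (F * G) (F' * G') :=
  (h.mul_right hG).trans (h'.mul_left hF')

lemma mul_right_cancel (h : EqModExp T (F * H) (G * H)) (hH : ∀ᶠ x in atTop, H x ≠ 0)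
    (hH_inv : Subexponential H⁻¹) : EqModExp T F G := by
  intro τ hτ
  refine (h.mul_right hH_inv τ hτ).congr' ?_ EventuallyEq.rfl
  filter_upwards [hH] with x hx
  simp [hx]

-- Being a square modulo `exp (-T x)` pins the sign of `F`, so that `F + G` dominates `G`.
lemma of_mul_self (hT : 0 < T) (h : EqModExp T (F * F) (G * G)) (hF : EqModExp T F (L * L))
    (hG : ∀ᶠ x in atTop, 0 < G x) (hG_inv : Subexponential G⁻¹) : EqModExp T F G := by
  have decay : Tendsto (fun x => Real.exp (-(T / 2 * x))) atTop (𝓝 0) :=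
    Real.tendsto_exp_neg_atTop_nhds_zero.comp (tendsto_id.const_mul_atTop (half_pos hT))
  have nearly_nonneg : ∀ᶠ x in atTop, ‖(F * G⁻¹ - L * L * G⁻¹) x‖ < 1 / 2 :=
    ((hF.mul_right hG_inv _ (half_lt_self hT)).trans_tendsto decay).norm.eventually_lt_const
      (by simp)
  have dominated : (F - G) =O[atTop] (F * F * G⁻¹ - G * G * G⁻¹) := by
    refine IsBigO.of_bound 2 ?_
    filter_upwards [nearly_nonneg, hG] with x hx hGx
    have factor : (F * F * G⁻¹ - G * G * G⁻¹) x = (F - G) x * ((F x + G x) * (G x)⁻¹) := by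
      simp only [Pi.sub_apply, Pi.mul_apply, Pi.inv_apply]
      ring
    have lower : 1 / 2 ≤ (F x + G x) * (G x)⁻¹ := by
      have hL : 0 ≤ L x * L x * (G x)⁻¹ := mul_nonneg (mul_self_nonneg _) (inv_pos.2 hGx).le
      have hlt := (abs_lt.1 hx).1
      simp only [Pi.sub_apply, Pi.mul_apply, Pi.inv_apply] at hlt
      rw [add_mul, mul_inv_cancel₀ hGx.ne']
      linarith
    rw [factor, norm_mul, Real.norm_of_nonneg (r := _ * _) (by linarith)]
    nlinarith [norm_nonneg ((F - G) x)]
  exact fun τ hτ => dominated.trans (h.mul_right hG_inv τ hτ)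

end EqModExp

variable {T : ℝ} {K : ℝ → ℝ → ℝ}

lemma eqModExp_rpow_add_of_mul {α β : ℝ} (hK : Subexponential (K β))
    (hmul : EqModExp T (K α * K β) (K (α + β))) (hα : EqModExp T (K α) fun x => x ^ (-α))
    (hβ : EqModExp T (K β) fun x => x ^ (-β)) :
    EqModExp T (K (α + β)) fun x => x ^ (-(α + β)) := by
  refine (hmul.symm.trans (hα.mul hβ (subexponential_rpow _) hK)).trans
    (EqModExp.of_eventuallyEq ?_)
  filter_upwards [eventually_gt_atTop 0] with x hx
  rw [Pi.mul_apply, ← Real.rpow_add hx, neg_add]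

lemma eqModExp_rpow_of_add_self {α : ℝ} (hT : 0 < T) (hα : 0 < α)
    (hmul : ∀ α > 0, ∀ β > 0, EqModExp T (K α * K β) (K (α + β)))
    (h : EqModExp T (K (α + α)) fun x => x ^ (-(α + α))) :
    EqModExp T (K α) fun x => x ^ (-α) := by
  have square : EqModExp T (K α) (K (α / 2) * K (α / 2)) := by
    simpa only [add_halves] using (hmul _ (half_pos hα) _ (half_pos hα)).symm
  refine EqModExp.of_mul_self hT (((hmul α hα α hα).trans h).trans
    (EqModExp.of_eventuallyEq ?_)) square ?_ (subexponential_inv_rpow _)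
  · filter_upwards [eventually_gt_atTop 0] with x hx
    rw [Pi.mul_apply, ← Real.rpow_add hx, neg_add]
  · filter_upwards [eventually_gt_atTop 0] with x hx using Real.rpow_pos_of_pos hx _

end Asymptotics

lemma dyadic_induction {P : ℝ → Prop} (one : P 1) (half : ∀ α > 0, P (α + α) → P α)
    (add : ∀ α > 0, ∀ β > 0, P α → P β → P (α + β)) (n : ℕ) {m : ℕ} (hm : 1 ≤ m) :
    P (m / 2 ^ n) := by
  have unit : P (1 / 2 ^ n) := by
    induction n with
    | zero => simpa using one
    | succ n ih =>
      refine half _ (by positivity) ?_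
      rwa [show (1 / 2 ^ (n + 1) + 1 / 2 ^ (n + 1) : ℝ) = 1 / 2 ^ n by ring]
  induction m, hm using Nat.le_induction with
  | base => simpa using unit
  | succ m hm ih =>
    have hm' : (0 : ℝ) < m := by exact_mod_cast hm
    have := add _ (div_pos hm' (by positivity)) _ (by positivity) ih unit
    rwa [← add_div, ← Nat.cast_add_one] at this

lemma exists_seq_tendsto_of_half_of_add {P : ℝ → Prop} (one : P 1)
    (half : ∀ α > 0, P (α + α) → P α) (add : ∀ α > 0, ∀ β > 0, P α → P β → P (α + β))
    {α : ℝ} (hα : 0 < α) :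
    ∃ d : ℕ → ℝ, (∀ n, 0 < d n ∧ P (d n)) ∧ Tendsto d atTop (𝓝 α) := by
  have ceil_pos : ∀ n : ℕ, 1 ≤ ⌈α * 2 ^ n⌉₊ := fun n => Nat.one_le_ceil_iff.2 (by positivity)
  refine ⟨fun n => ⌈α * 2 ^ n⌉₊ / 2 ^ n,
    fun n => ⟨?_, dyadic_induction one half add n (ceil_pos n)⟩, ?_⟩
  · have : (0 : ℝ) < ⌈α * 2 ^ n⌉₊ := by exact_mod_cast ceil_pos n
    positivity
  · exact (tendsto_nat_ceil_mul_div_atTop hα.le).comp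
      (tendsto_pow_atTop_atTop_of_one_lt one_lt_two)

section TruncatedLaplace

open scoped Convolution

/-- The Laplace transform of the restriction of `g` to `[a, b]`, with `a` as the origin of time. -/
noncomputable def truncLaplace (a b : ℝ) (g : ℝ → ℝ) (x : ℝ) : ℝ :=
  ∫ t in Icc a b, Real.exp (-(x * (t - a))) * g t

variable {a b c x : ℝ} {f g k : ℝ → ℝ} {S : Set ℝ}

lemma integrableOn_exp_mul_of_le (hS : MeasurableSet S) (hSa : S ⊆ Ici a) (hcx : c ≤ x)
    (hg : IntegrableOn (fun t => Real.exp (-(c * (t - a))) * g t) S) :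
    IntegrableOn (fun t => Real.exp (-(x * (t - a))) * g t) S := by
  have split : ∀ t, Real.exp (-(x * (t - a))) * g t =
      Real.exp (-((x - c) * (t - a))) * (Real.exp (-(c * (t - a))) * g t) := fun t => by
    rw [← mul_assoc, ← Real.exp_add]
    ring_nf
  simp only [split]
  refine Integrable.bdd_mul (c := 1) hg (by fun_prop) ?_
  filter_upwards [ae_restrict_mem hS] with t ht
  rw [Real.norm_eq_abs, Real.abs_exp, Real.exp_le_one_iff, neg_nonpos]
  exact mul_nonneg (sub_nonneg.2 hcx) (sub_nonneg.2 (hSa ht))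

lemma integrableOn_exp_mul (hS : MeasurableSet S) (hSa : S ⊆ Ici a) (hx : 0 ≤ x)
    (hg : IntegrableOn g S) : IntegrableOn (fun t => Real.exp (-(x * (t - a))) * g t) S :=
  integrableOn_exp_mul_of_le hS hSa hx (by simpa using hg)

lemma truncLaplace_congr_ae (h : ∀ᵐ t ∂volume.restrict (Icc a b), f t = g t) :
    truncLaplace a b f = truncLaplace a b g := by
  ext x
  refine integral_congr_ae ?_
  filter_upwards [h] with t ht
  rw [ht]

lemma truncLaplace_sub (hf : IntegrableOn f (Icc a b)) (hg : IntegrableOn g (Icc a b))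
    (hx : 0 ≤ x) :
    truncLaplace a b (f - g) x = truncLaplace a b f x - truncLaplace a b g x := by
  rw [truncLaplace, truncLaplace, truncLaplace,
    ← integral_sub (integrableOn_exp_mul measurableSet_Icc Icc_subset_Ici_self hx hf)
      (integrableOn_exp_mul measurableSet_Icc Icc_subset_Ici_self hx hg)]
  congr 1 with t
  rw [Pi.sub_apply, mul_sub (Real.exp _)]

lemma subexponential_truncLaplace (hg : IntegrableOn g (Icc a b)) :
    Subexponential (truncLaplace a b g) := by
  intro ε hε
  refine IsBigO.of_bound (∫ t in Icc a b, |g t|) ?_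
  filter_upwards [eventually_ge_atTop 0] with x hx
  have bounded : ‖truncLaplace a b g x‖ ≤ ∫ t in Icc a b, |g t| := by
    refine norm_integral_le_of_norm_le hg.abs ?_
    filter_upwards [ae_restrict_mem measurableSet_Icc] with t ht
    rw [norm_mul, Real.norm_eq_abs, Real.norm_eq_abs, Real.abs_exp]
    refine mul_le_of_le_one_left (abs_nonneg _) ?_
    rw [Real.exp_le_one_iff, neg_nonpos]
    exact mul_nonneg hx (sub_nonneg.2 ht.1)
  refine bounded.trans (le_mul_of_one_le_right (integral_nonneg fun t => abs_nonneg _) ?_)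
  rw [Real.norm_eq_abs, Real.abs_exp]
  exact Real.one_le_exp (mul_nonneg hε.le hx)

lemma norm_integral_Ioi_exp_mul_le (hcx : c ≤ x)
    (hg : IntegrableOn (fun t => Real.exp (-(c * (t - a))) * g t) (Ioi b)) :
    ‖∫ t in Ioi b, Real.exp (-(x * (t - a))) * g t‖ ≤
      Real.exp (-((x - c) * (b - a))) * ∫ t in Ioi b, ‖Real.exp (-(c * (t - a))) * g t‖ := by
  rw [← integral_const_mul]
  refine norm_integral_le_of_norm_le (hg.norm.const_mul _) ?_
  filter_upwards [ae_restrict_mem measurableSet_Ioi] with t (ht : b < t)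
  rw [norm_mul, norm_mul, Real.norm_of_nonneg (Real.exp_pos _).le,
    Real.norm_of_nonneg (Real.exp_pos _).le, ← mul_assoc, ← Real.exp_add]
  gcongr
  nlinarith

lemma eqModExp_truncLaplace_integral_Ici (hab : a ≤ b)
    (hg : IntegrableOn (fun t => Real.exp (-(c * (t - a))) * g t) (Ici a)) :
    EqModExp (b - a) (truncLaplace a b g)
      fun x => ∫ t in Ici a, Real.exp (-(x * (t - a))) * g t := by
  intro τ hτ
  refine IsBigO.of_bound
    (Real.exp (c * (b - a)) * ∫ t in Ioi b, ‖Real.exp (-(c * (t - a))) * g t‖) ?_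
  filter_upwards [eventually_ge_atTop c, eventually_ge_atTop 0] with x hcx hx
  have hgx := integrableOn_exp_mul_of_le measurableSet_Ici Subset.rfl hcx hg
  have tail : (truncLaplace a b g - fun x => ∫ t in Ici a, Real.exp (-(x * (t - a))) * g t) x =
      -∫ t in Ioi b, Real.exp (-(x * (t - a))) * g t := by
    rw [Pi.sub_apply, ← Icc_union_Ioi_eq_Ici hab, setIntegral_union
      ((Iic_disjoint_Ioi le_rfl).mono_left Icc_subset_Iic_self) measurableSet_Ioi
      (hgx.mono_set Icc_subset_Ici_self) (hgx.mono_set (Ioi_subset_Ici hab)), truncLaplace,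
      sub_add_cancel_left]
  calc _ = ‖∫ t in Ioi b, Real.exp (-(x * (t - a))) * g t‖ := by rw [tail, norm_neg]
    _ ≤ Real.exp (-((x - c) * (b - a))) * ∫ t in Ioi b, ‖Real.exp (-(c * (t - a))) * g t‖ :=
      norm_integral_Ioi_exp_mul_le hcx (hg.mono_set (Ioi_subset_Ici hab))
    _ ≤ Real.exp (c * (b - a)) * Real.exp (-(τ * x)) *
        ∫ t in Ioi b, ‖Real.exp (-(c * (t - a))) * g t‖ := by
      rw [← Real.exp_add]
      gcongr
      nlinarith
    _ = _ := by
      rw [Real.norm_eq_abs, Real.abs_exp]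
      ring

lemma integral_exp_mul_convolution {F G : ℝ → ℝ}
    (hF : Integrable fun s => Real.exp (-(x * (s - a))) * F s)
    (hG : Integrable fun u => Real.exp (-(x * u)) * G u) :
    ∫ t, Real.exp (-(x * (t - a))) * (F ⋆[ContinuousLinearMap.mul ℝ ℝ, volume] G) t =
      (∫ s, Real.exp (-(x * (s - a))) * F s) * ∫ u, Real.exp (-(x * u)) * G u := by
  have weighted := integral_convolution (μ := volume) (ContinuousLinearMap.mul ℝ ℝ) hF hG
  rw [ContinuousLinearMap.mul_apply'] at weighted
  rw [← weighted]
  congr 1 with t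
  rw [convolution_mul, convolution_mul, ← integral_const_mul]
  congr 1 with s
  rw [show -(x * (t - a)) = -(x * (s - a)) + -(x * (t - s)) by ring, Real.exp_add]
  ring

/-- The translate to `[0, b - a]` of the restriction of `k` to `[a, b]`, so that `convOp a k f` is
on `[a, b]` the convolution on the line of `f`, extended by zero, with this function. -/
noncomputable def translatedKernel (a b : ℝ) (k : ℝ → ℝ) (u : ℝ) : ℝ :=
  (Icc a b).indicator k (u + a)

lemma integrable_translatedKernel (hk : IntegrableOn k (Icc a b)) :
    Integrable (translatedKernel a b k) :=
  (hk.integrable_indicator measurableSet_Icc).comp_add_right a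

lemma exp_mul_indicator (S : Set ℝ) (g : ℝ → ℝ) :
    (fun t => Real.exp (-(x * (t - a))) * S.indicator g t) =
      S.indicator fun t => Real.exp (-(x * (t - a))) * g t :=
  funext fun _ => (indicator_mul_right S (fun t => Real.exp (-(x * (t - a)))) g).symm

lemma integrable_exp_mul_indicator (hx : 0 ≤ x) (hg : IntegrableOn g (Icc a b)) :
    Integrable fun t => Real.exp (-(x * (t - a))) * (Icc a b).indicator g t := by
  rw [exp_mul_indicator]
  exact (integrableOn_exp_mul measurableSet_Icc Icc_subset_Ici_self hx hg).integrable_indicator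
    measurableSet_Icc

lemma integral_exp_mul_indicator :
    ∫ t, Real.exp (-(x * (t - a))) * (Icc a b).indicator g t = truncLaplace a b g x := by
  rw [exp_mul_indicator, integral_indicator measurableSet_Icc, truncLaplace]

lemma convolution_translatedKernel_of_lt (k : ℝ → ℝ) {t : ℝ} (ht : t < a) :
    ((Icc a b).indicator f ⋆[ContinuousLinearMap.mul ℝ ℝ, volume] translatedKernel a b k) t =
      0 := by
  rw [convolution_mul]
  refine integral_eq_zero_of_ae (Eventually.of_forall fun s => ?_)
  by_cases hs : a ≤ s
  · have : t - s + a ∉ Icc a b := fun h => by linarith [h.1]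
    simp [translatedKernel, this]
  · simp [hs]

lemma convolution_translatedKernel_of_mem (k f : ℝ → ℝ) {t : ℝ} (ht : t ∈ Icc a b) :
    ((Icc a b).indicator f ⋆[ContinuousLinearMap.mul ℝ ℝ, volume] translatedKernel a b k) t =
      convOp a k f t := by
  rw [convolution_mul, convOp, intervalIntegral.integral_of_le ht.1,
    ← integral_Icc_eq_integral_Ioc, ← integral_indicator measurableSet_Icc]
  congr 1 with s
  by_cases hs : s ∈ Icc a t
  · have hsb : s ∈ Icc a b := ⟨hs.1, hs.2.trans ht.2⟩
    have hts : t - s + a ∈ Icc a b := ⟨by linarith [hs.2], by linarith [hs.1, ht.2]⟩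
    simp only [translatedKernel, indicator_of_mem hs, indicator_of_mem hsb, indicator_of_mem hts,
      mul_comm]
  · rw [indicator_of_notMem hs, mul_eq_zero]
    by_cases has : a ≤ s
    · have hts : t - s + a ∉ Icc a b := fun h => hs ⟨has, by linarith [h.1]⟩
      exact Or.inr (indicator_of_notMem hts k)
    · exact Or.inl (indicator_of_notMem (fun h => has h.1) f)

lemma integrable_convolution_translatedKernel (hk : IntegrableOn k (Icc a b))
    (hf : IntegrableOn f (Icc a b)) : Integrable
      ((Icc a b).indicator f ⋆[ContinuousLinearMap.mul ℝ ℝ, volume] translatedKernel a b k) :=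
  (hf.integrable_indicator measurableSet_Icc).integrable_convolution _
    (integrable_translatedKernel hk)

lemma integrableOn_convOp (hk : IntegrableOn k (Icc a b)) (hf : IntegrableOn f (Icc a b)) :
    IntegrableOn (convOp a k f) (Icc a b) :=
  (integrable_convolution_translatedKernel hk hf).integrableOn.congr_fun
    (fun _ => convolution_translatedKernel_of_mem k f) measurableSet_Icc

lemma truncLaplace_convOp (hab : a ≤ b) (hk : IntegrableOn k (Icc a b))
    (hf : IntegrableOn f (Icc a b)) :
    EqModExp (b - a) (truncLaplace a b (convOp a k f))
      (truncLaplace a b k * truncLaplace a b f) := by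
  set W := (Icc a b).indicator f ⋆[ContinuousLinearMap.mul ℝ ℝ, volume] translatedKernel a b k
    with hW
  have laplace_W : ∀ x, 0 ≤ x → ∫ t in Ici a, Real.exp (-(x * (t - a))) * W t =
      truncLaplace a b k x * truncLaplace a b f x := by
    intro x hx
    have shift : ∀ u, Real.exp (-(x * u)) * translatedKernel a b k u =
        (fun t => Real.exp (-(x * (t - a))) * (Icc a b).indicator k t) (u + a) := fun u => by
      simp [translatedKernel]
    rw [setIntegral_eq_integral_of_forall_compl_eq_zero fun t ht => by
      rw [hW, convolution_translatedKernel_of_lt k (not_le.1 ht), mul_zero],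
      integral_exp_mul_convolution (integrable_exp_mul_indicator hx hf)
        (by simpa only [shift] using (integrable_exp_mul_indicator hx hk).comp_add_right a)]
    simp only [shift]
    rw [integral_add_right_eq_self (fun t => Real.exp (-(x * (t - a))) * (Icc a b).indicator k t),
      integral_exp_mul_indicator, integral_exp_mul_indicator, mul_comm]
  have truncate := eqModExp_truncLaplace_integral_Ici (c := 0) (g := W) hab
    (by simpa using (integrable_convolution_translatedKernel hk hf).integrableOn)
  have convOp_eq_W : truncLaplace a b (convOp a k f) = truncLaplace a b W :=
    truncLaplace_congr_ae <| (ae_restrict_mem measurableSet_Icc).mono fun t ht =>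
      (convolution_translatedKernel_of_mem k f ht).symm
  rw [convOp_eq_W]
  refine truncate.trans (EqModExp.of_eventuallyEq ?_)
  filter_upwards [eventually_ge_atTop 0] with x hx using laplace_W x hx

end TruncatedLaplace

section Injectivity

lemma hasSum_integral_pow_div_factorial_mul {Ω : Type*} [MeasurableSpace Ω] {μ : Measure Ω}
    {z g : Ω → ℝ} {M : ℝ} (hz : AEStronglyMeasurable z μ) (hM : ∀ᵐ ω ∂μ, |z ω| ≤ M)
    (hg : Integrable g μ) :
    HasSum (fun n : ℕ => ∫ ω, z ω ^ n / n.factorial * g ω ∂μ) (∫ ω, Real.exp (z ω) * g ω ∂μ) := by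
  have exp_series : ∀ y : ℝ, HasSum (fun n : ℕ => y ^ n / n.factorial) (Real.exp y) := fun y => by
    simpa only [Real.exp_eq_exp_ℝ] using NormedSpace.expSeries_div_hasSum_exp (𝔸 := ℝ) y
  refine hasSum_integral_of_dominated_convergence (fun n ω => M ^ n / n.factorial * |g ω|)
    (fun n => ((hz.aemeasurable.pow_const n).div_const _).aestronglyMeasurable.mul hg.1)
    (fun n => ?_) (Eventually.of_forall fun ω => ((exp_series M).mul_right _).summable) ?_
    (Eventually.of_forall fun ω => (exp_series _).mul_right _)
  · filter_upwards [hM] with ω hω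
    rw [norm_mul, norm_div, norm_pow, Real.norm_natCast, Real.norm_eq_abs, Real.norm_eq_abs]
    gcongr
  · simp only [fun ω => ((exp_series M).mul_right |g ω|).tsum_eq]
    exact hg.abs.const_mul _

variable {a b x σ τ : ℝ} {f g : ℝ → ℝ}

lemma hasSum_truncLaplace (hg : IntegrableOn g (Icc a b)) (hx : 0 ≤ x) (τ : ℝ) :
    HasSum (fun n : ℕ => (-Real.exp (x * (τ - a))) ^ n / n.factorial * truncLaplace a b g (n * x))
      (∫ t in Icc a b, Real.exp (-Real.exp (x * (τ - t))) * g t) := by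
  have bounded : ∀ᵐ t ∂volume.restrict (Icc a b),
      |-Real.exp (x * (τ - t))| ≤ Real.exp (x * (τ - a)) := by
    filter_upwards [ae_restrict_mem measurableSet_Icc] with t ht
    rw [abs_neg, Real.abs_exp]
    gcongr
    exact ht.1
  convert hasSum_integral_pow_div_factorial_mul (by fun_prop) bounded hg using 2 with n
  rw [truncLaplace, ← integral_const_mul]
  congr 1 with t
  have factor : Real.exp (x * (τ - t)) = Real.exp (x * (τ - a)) * Real.exp (-(x * (t - a))) := by
    rw [← Real.exp_add]
    ring_nf
  rw [factor, ← neg_mul (Real.exp _), mul_pow, ← Real.exp_nat_mul]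
  ring_nf

lemma tendsto_integral_exp_neg_exp_mul (hg : IntegrableOn g (Icc a b)) (τ : ℝ) :
    Tendsto (fun x => ∫ t in Icc a b, Real.exp (-Real.exp (x * (τ - t))) * g t) atTop
      (𝓝 (∫ t in Icc a b ∩ Ioi τ, g t)) := by
  rw [← setIntegral_indicator measurableSet_Ioi]
  refine tendsto_integral_filter_of_dominated_convergence (fun t => |g t|)
    (Eventually.of_forall fun x => AEStronglyMeasurable.mul (by fun_prop) hg.aestronglyMeasurable)
    (Eventually.of_forall fun x => Eventually.of_forall fun t => ?_) hg.abs ?_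
  · rw [norm_mul, Real.norm_eq_abs, Real.norm_eq_abs, Real.abs_exp]
    refine mul_le_of_le_one_left (abs_nonneg _) ?_
    rw [Real.exp_le_one_iff, neg_nonpos]
    exact (Real.exp_pos _).le
  · filter_upwards [ae_restrict_of_ae (Measure.ae_ne volume τ)] with t ht
    rcases ht.lt_or_gt with htτ | htτ
    · rw [indicator_of_notMem (notMem_Ioi.2 htτ.le), ← zero_mul (g t)]
      exact ((Real.tendsto_exp_atBot.comp tendsto_neg_atTop_atBot).comp (Real.tendsto_exp_atTop.comp
        (tendsto_id.atTop_mul_const (sub_pos.2 htτ)))).mul_const _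
    · rw [indicator_of_mem (mem_Ioi.2 htτ)]
      have inner : Tendsto (fun x => -Real.exp (x * (τ - t))) atTop (𝓝 (-0)) :=
        (Real.tendsto_exp_atBot.comp (tendsto_id.atTop_mul_const_of_neg (sub_neg.2 htτ))).neg
      simpa using (inner.rexp).mul_const (g t)

lemma norm_integral_exp_neg_exp_mul_sub_le {C : ℝ} (hg : IntegrableOn g (Icc a b)) (hx : 0 ≤ x)
    (hdecay : ∀ y ≥ x, ‖truncLaplace a b g y‖ ≤ C * Real.exp (-(σ * y))) :
    ‖(∫ t in Icc a b, Real.exp (-Real.exp (x * (τ - t))) * g t) - ∫ t in Icc a b, g t‖ ≤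
      C * (Real.exp (Real.exp (-((σ - (τ - a)) * x))) - 1) := by
  set q := Real.exp (-((σ - (τ - a)) * x)) with hq
  have term_le : ∀ n : ℕ, ‖(-Real.exp (x * (τ - a))) ^ (n + 1) / (n + 1).factorial *
      truncLaplace a b g ((n + 1 : ℕ) * x)‖ ≤ C * (q ^ (n + 1) / (n + 1).factorial) := by
    intro n
    have hnx : x ≤ (n + 1 : ℕ) * x := le_mul_of_one_le_left hx (by simp)
    rw [norm_mul, norm_div, norm_pow, norm_neg, Real.norm_natCast, Real.norm_eq_abs, Real.abs_exp]
    calc _ ≤ Real.exp (x * (τ - a)) ^ (n + 1) / (n + 1).factorial *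
          (C * Real.exp (-(σ * ((n + 1 : ℕ) * x)))) := by
          gcongr
          exact hdecay _ hnx
      _ = C * (q ^ (n + 1) / (n + 1).factorial) := by
        rw [hq, ← Real.exp_nat_mul, ← Real.exp_nat_mul,
          show (n + 1 : ℕ) * -((σ - (τ - a)) * x) =
            (n + 1 : ℕ) * (x * (τ - a)) + -(σ * ((n + 1 : ℕ) * x)) by ring, Real.exp_add]
        ring
  have series := (hasSum_nat_add_iff' 1).2 (hasSum_truncLaplace hg hx τ)
  have majorant := ((hasSum_nat_add_iff' 1).2
    (NormedSpace.expSeries_div_hasSum_exp (𝔸 := ℝ) q)).mul_left C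
  simpa [truncLaplace, ← Real.exp_eq_exp_ℝ] using series.norm_le_of_bounded majorant term_le

lemma tendsto_integral_exp_neg_exp_mul_of_isBigO (hg : IntegrableOn g (Icc a b)) (hτ : τ - a < σ)
    (hdecay : truncLaplace a b g =O[atTop] fun x => Real.exp (-(σ * x))) :
    Tendsto (fun x => ∫ t in Icc a b, Real.exp (-Real.exp (x * (τ - t))) * g t) atTop
      (𝓝 (∫ t in Icc a b, g t)) := by
  obtain ⟨C, hC⟩ := hdecay.bound
  have remainder_le : ∀ᶠ x in atTop,
      ‖(∫ t in Icc a b, Real.exp (-Real.exp (x * (τ - t))) * g t) - ∫ t in Icc a b, g t‖ ≤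
        C * (Real.exp (Real.exp (-((σ - (τ - a)) * x))) - 1) := by
    filter_upwards [eventually_ge_atTop 0, eventually_forall_ge_atTop.2 hC] with x hx hxC
    exact norm_integral_exp_neg_exp_mul_sub_le hg hx fun y hy => by
      simpa only [Real.norm_eq_abs, Real.abs_exp] using hxC y hy
  have decay : Tendsto (fun x => Real.exp (-((σ - (τ - a)) * x))) atTop (𝓝 0) :=
    Real.tendsto_exp_neg_atTop_nhds_zero.comp (tendsto_id.const_mul_atTop (sub_pos.2 hτ))
  refine tendsto_iff_norm_sub_tendsto_zero.2
    (squeeze_zero' (Eventually.of_forall fun _ => norm_nonneg _) remainder_le ?_)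
  simpa using (decay.rexp.sub_const 1).const_mul C

lemma integral_eq_zero_of_isBigO_truncLaplace (hg : IntegrableOn g (Icc a b)) (haτ : a ≤ τ)
    (hτb : τ ≤ b) (hτ : τ - a < σ)
    (hdecay : truncLaplace a b g =O[atTop] fun x => Real.exp (-(σ * x))) :
    ∫ t in a..τ, g t = 0 := by
  have limits_eq := tendsto_nhds_unique (tendsto_integral_exp_neg_exp_mul hg τ)
    (tendsto_integral_exp_neg_exp_mul_of_isBigO hg hτ hdecay)
  have split := integral_inter_add_sdiff measurableSet_Ioi hg (t := Ioi τ)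
  have diff : Icc a b \ Ioi τ = Icc a τ := by
    ext t
    simp only [Set.mem_sdiff, mem_Icc, mem_Ioi, not_lt]
    exact ⟨fun h => ⟨h.1.1, h.2⟩, fun h => ⟨⟨h.1, h.2.trans hτb⟩, h.2⟩⟩
  rw [intervalIntegral.integral_of_le haτ, ← integral_Icc_eq_integral_Ioc, ← diff]
  linarith

lemma ae_eq_zero_of_forall_integral_eq_zero (hg : IntegrableOn g (Icc a b))
    (h : ∀ τ ∈ Ico a b, ∫ t in a..τ, g t = 0) :
    ∀ᵐ t ∂volume.restrict (Icc a b), g t = 0 := by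
  rw [← Measure.restrict_congr_set Ioo_ae_eq_Icc, ae_restrict_iff' measurableSet_Ioo]
  rcases le_total b a with hba | hab
  · exact Eventually.of_forall fun t ht => absurd (ht.1.trans ht.2) hba.not_gt
  have hgi : IntervalIntegrable g volume a b :=
    (intervalIntegrable_iff_integrableOn_Icc_of_le hab).2 hg
  filter_upwards [hgi.ae_hasDerivAt_integral] with t deriv ht
  rw [uIcc_of_le hab] at deriv
  have locally_zero : (fun τ => ∫ s in a..τ, g s) =ᶠ[𝓝 t] fun _ => 0 := by
    filter_upwards [Ioo_mem_nhds ht.1 ht.2] with τ hτ using h τ (Ioo_subset_Ico_self hτ)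
  exact (deriv (Ioo_subset_Icc_self ht) a (left_mem_Icc.2 hab)).unique
    ((hasDerivAt_const t (0 : ℝ)).congr_of_eventuallyEq locally_zero)

lemma ae_eq_of_eqModExp_truncLaplace (hf : IntegrableOn f (Icc a b))
    (hg : IntegrableOn g (Icc a b))
    (h : EqModExp (b - a) (truncLaplace a b f) (truncLaplace a b g)) :
    ∀ᵐ t ∂volume.restrict (Icc a b), f t = g t := by
  have integral_sub_eq_zero : ∀ τ ∈ Ico a b, ∫ t in a..τ, (f - g) t = 0 := by
    intro τ hτ
    obtain ⟨σ, hτσ, hσ⟩ := exists_between (sub_lt_sub_right hτ.2 a)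
    refine integral_eq_zero_of_isBigO_truncLaplace (hf.sub hg) hτ.1 hτ.2.le hτσ
      ((h σ hσ).congr' ?_ EventuallyEq.rfl)
    filter_upwards [eventually_ge_atTop 0] with x hx
    exact (truncLaplace_sub hf hg hx).symm
  filter_upwards [ae_eq_zero_of_forall_integral_eq_zero (hf.sub hg) integral_sub_eq_zero] with t ht
    using sub_eq_zero.1 ht

end Injectivity

section RiemannLiouville

/-- The kernel of the Riemann–Liouville integral of order `α`, placed on `[a, ∞)` as `convOp`
expects. -/
noncomputable def rlKernel (a α t : ℝ) : ℝ :=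
  (t - a) ^ (α - 1) / Real.Gamma α

variable {a b x α : ℝ} {k k' : ℝ → ℝ}

lemma rlKernel_one (a : ℝ) : rlKernel a 1 = 1 := by
  ext t
  simp [rlKernel]

lemma RL_eq_convOp (a α : ℝ) (f : ℝ → ℝ) : RL a α f = convOp a (rlKernel a α) f := by
  ext t
  simp only [RL, convOp, rlKernel, add_sub_cancel_right]

lemma integrableOn_rlKernel (a b : ℝ) (hα : 0 < α) : IntegrableOn (rlKernel a α) (Icc a b) := by
  have := (intervalIntegral.intervalIntegrable_rpow' (r := α - 1) (a := 0) (b := b - a)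
    (by linarith)).comp_sub_right a
  rw [zero_add, sub_add_cancel] at this
  rcases le_or_gt a b with hab | hab
  · exact ((intervalIntegrable_iff_integrableOn_Icc_of_le hab).1 this).div_const _
  · simp [Icc_eq_empty_of_lt hab]

lemma integrableOn_exp_mul_rlKernel (a : ℝ) (hα : 0 < α) :
    IntegrableOn (fun t => Real.exp (-(1 * (t - a))) * rlKernel a α t) (Ici a) := by
  have shifted := (measurePreserving_sub_right volume a).integrableOn_comp_preimage
    (MeasurableEquiv.subRight a).measurableEmbedding |>.2 (Real.GammaIntegral_convergent hα)
  rw [preimage_sub_const_Ioi, zero_add] at shifted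
  rw [integrableOn_Ici_iff_integrableOn_Ioi]
  simpa only [IntegrableOn, rlKernel, Function.comp_apply, one_mul, mul_div_assoc] using
    Integrable.div_const shifted (Real.Gamma α)

lemma integral_exp_mul_rlKernel (a : ℝ) (hα : 0 < α) (hx : 0 < x) :
    ∫ t in Ici a, Real.exp (-(x * (t - a))) * rlKernel a α t = x ^ (-α) := by
  have shifted := (measurePreserving_sub_right volume a).setIntegral_preimage_emb
    (MeasurableEquiv.subRight a).measurableEmbedding
    (fun u => u ^ (α - 1) * Real.exp (-(x * u))) (Ioi 0)
  rw [preimage_sub_const_Ioi, zero_add, Real.integral_rpow_mul_exp_neg_mul_Ioi hα hx] at shifted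
  calc _ = (∫ t in Ioi a, (t - a) ^ (α - 1) * Real.exp (-(x * (t - a)))) / Real.Gamma α := by
        rw [integral_Ici_eq_integral_Ioi, ← integral_div]
        congr 1 with t
        rw [rlKernel]
        ring
    _ = x ^ (-α) := by
        rw [shifted, mul_div_cancel_right₀ _ (Real.Gamma_pos_of_pos hα).ne', one_div,
          Real.inv_rpow hx.le, Real.rpow_neg hx.le]

lemma truncLaplace_rlKernel (hab : a ≤ b) (hα : 0 < α) :
    EqModExp (b - a) (truncLaplace a b (rlKernel a α)) fun x => x ^ (-α) := by
  refine (eqModExp_truncLaplace_integral_Ici hab (integrableOn_exp_mul_rlKernel a hα)).trans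
    (EqModExp.of_eventuallyEq ?_)
  filter_upwards [eventually_gt_atTop 0] with x hx using integral_exp_mul_rlKernel a hα hx

lemma RL_one (hα : 0 < α) (t : ℝ) : RL a α 1 t = (t - a) ^ α / Real.Gamma (α + 1) := by
  simp only [RL, Pi.one_apply, mul_one]
  rw [intervalIntegral.integral_comp_sub_left (fun u => u ^ (α - 1) / Real.Gamma α) t, sub_self,
    intervalIntegral.integral_div, integral_rpow (Or.inl (by linarith)), sub_add_cancel,
    Real.zero_rpow hα.ne', sub_zero, div_div, Real.Gamma_add_one hα.ne']

lemma tendsto_RL_one (a t : ℝ) (hα : 0 < α) :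
    Tendsto (fun β => RL a β 1 t) (𝓝 α) (𝓝 (RL a α 1 t)) := by
  have gamma : ContinuousAt Real.Gamma (α + 1) :=
    (Real.differentiableAt_Gamma fun m =>
      ((neg_nonpos.2 m.cast_nonneg).trans_lt (by linarith)).ne').continuousAt
  have explicit : ContinuousAt (fun β => (t - a) ^ β / Real.Gamma (β + 1)) α := by
    refine (Real.continuousAt_const_rpow' hα.ne').div
      (gamma.comp (f := fun β => β + 1) (by fun_prop)) (Real.Gamma_pos_of_pos (by linarith)).ne'
  rw [RL_one hα]
  refine explicit.tendsto.congr' ?_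
  filter_upwards [eventually_gt_nhds hα] with β hβ using (RL_one hβ t).symm

lemma convOp_congr_ae (h : ∀ᵐ t ∂volume.restrict (Icc a b), k t = k' t) {t : ℝ}
    (ht : t ∈ Icc a b) (f : ℝ → ℝ) : convOp a k f t = convOp a k' f t := by
  have reflected := (quasiMeasurePreserving_sub_left (volume : Measure ℝ) (t + a)).ae
    ((ae_restrict_iff' measurableSet_Icc).1 h)
  refine intervalIntegral.integral_congr_ae ?_
  filter_upwards [reflected] with s hs hst
  rw [uIoc_of_le ht.1] at hst
  rw [sub_add_eq_add_sub, hs ⟨by linarith [hst.2], by linarith [hst.1, ht.2]⟩]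

end RiemannLiouville

section IndexLaw

variable {a b : ℝ} {F G f g k l m : ℝ → ℝ}

lemma truncLaplace_one (hab : a ≤ b) :
    EqModExp (b - a) (truncLaplace a b 1) fun x => x ^ (-1 : ℝ) := by
  simpa only [rlKernel_one] using truncLaplace_rlKernel hab one_pos

lemma eqModExp_of_mul_truncLaplace_one (hab : a ≤ b) (hF : Subexponential F)
    (hG : Subexponential G)
    (h : EqModExp (b - a) (F * truncLaplace a b 1) (G * truncLaplace a b 1)) :
    EqModExp (b - a) F G := by
  have mul_rpow := (((truncLaplace_one hab).mul_left hF).symm.trans h).trans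
    ((truncLaplace_one hab).mul_left hG)
  refine mul_rpow.mul_right_cancel ?_ (subexponential_inv_rpow _)
  filter_upwards [eventually_gt_atTop 0] with x hx using (Real.rpow_pos_of_pos hx _).ne'

lemma truncLaplace_of_ae_eq_convOp (hab : a ≤ b) (hk : IntegrableOn k (Icc a b))
    (hf : IntegrableOn f (Icc a b)) (h : ∀ᵐ t ∂volume.restrict (Icc a b), g t = convOp a k f t) :
    EqModExp (b - a) (truncLaplace a b g) (truncLaplace a b k * truncLaplace a b f) := by
  rw [truncLaplace_congr_ae h]
  exact truncLaplace_convOp hab hk hf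

lemma truncLaplace_mul_of_convOp_convOp_one (hab : a ≤ b) (hk : IntegrableOn k (Icc a b))
    (hl : IntegrableOn l (Icc a b)) (hm : IntegrableOn m (Icc a b))
    (hg : ∀ᵐ t ∂volume.restrict (Icc a b), g t = convOp a l 1 t)
    (h : ∀ᵐ t ∂volume.restrict (Icc a b), convOp a k g t = convOp a m 1 t) :
    EqModExp (b - a) (truncLaplace a b k * truncLaplace a b l) (truncLaplace a b m) := by
  have one_integrable : IntegrableOn (1 : ℝ → ℝ) (Icc a b) := continuous_one.integrableOn_Icc
  have g_integrable : IntegrableOn g (Icc a b) :=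
    (integrableOn_convOp hl one_integrable).congr (hg.mono fun _ => Eq.symm)
  refine eqModExp_of_mul_truncLaplace_one hab
    ((subexponential_truncLaplace hk).mul (subexponential_truncLaplace hl))
    (subexponential_truncLaplace hm) ?_
  calc EqModExp (b - a) _ (truncLaplace a b k * truncLaplace a b g) := by
        rw [mul_assoc]
        exact ((truncLaplace_of_ae_eq_convOp hab hl one_integrable hg).mul_left
          (subexponential_truncLaplace hk)).symm
    EqModExp (b - a) _ (truncLaplace a b (convOp a k g)) :=
      (truncLaplace_convOp hab hk g_integrable).symm
    EqModExp (b - a) _ (truncLaplace a b m * truncLaplace a b 1) :=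
      truncLaplace_of_ae_eq_convOp hab hm one_integrable h

lemma ae_eq_of_convOp_one_ae_eq (hab : a ≤ b) (hk : IntegrableOn k (Icc a b))
    (hl : IntegrableOn l (Icc a b))
    (h : ∀ᵐ t ∂volume.restrict (Icc a b), convOp a k 1 t = convOp a l 1 t) :
    ∀ᵐ t ∂volume.restrict (Icc a b), k t = l t := by
  have one_integrable : IntegrableOn (1 : ℝ → ℝ) (Icc a b) := continuous_one.integrableOn_Icc
  exact ae_eq_of_eqModExp_truncLaplace hk hl <| eqModExp_of_mul_truncLaplace_one hab
    (subexponential_truncLaplace hk) (subexponential_truncLaplace hl) <|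
    (truncLaplace_convOp hab hk one_integrable).symm.trans
      (truncLaplace_of_ae_eq_convOp hab hl one_integrable h)

lemma ae_eq_of_tendsto_integral_abs_sub {Ω : Type*} [MeasurableSpace Ω] {μ : Measure Ω}
    {F : ℕ → Ω → ℝ} {f g : Ω → ℝ} (hF : ∀ n, Integrable (F n) μ) (hf : Integrable f μ)
    (hFf : Tendsto (fun n => ∫ ω, |F n ω - f ω| ∂μ) atTop (𝓝 0))
    (hFg : ∀ᵐ ω ∂μ, Tendsto (fun n => F n ω) atTop (𝓝 (g ω))) : ∀ᵐ ω ∂μ, f ω = g ω := by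
  have norm_eq : ∀ n, eLpNorm (F n - f) 1 μ = ENNReal.ofReal (∫ ω, |F n ω - f ω| ∂μ) := fun n => by
    rw [eLpNorm_one_eq_lintegral_enorm, ← ofReal_integral_norm_eq_lintegral_enorm ((hF n).sub hf)]
    rfl
  have norm_tendsto : Tendsto (fun n => eLpNorm (F n - f) 1 μ) atTop (𝓝 0) := by
    simpa only [norm_eq, ENNReal.ofReal_zero] using ENNReal.tendsto_ofReal hFf
  obtain ⟨φ, hφ, hφf⟩ := (tendstoInMeasure_of_tendsto_eLpNorm one_ne_zero
    (fun n => (hF n).aestronglyMeasurable) hf.aestronglyMeasurable norm_tendsto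
    ).exists_seq_tendsto_ae
  filter_upwards [hφf, hFg] with ω hf hg
  exact tendsto_nhds_unique hf (hg.comp hφ.tendsto_atTop)

lemma ae_eq_rlKernel_of_index_law {k : ℝ → ℝ → ℝ} (hab : a < b)
    (hk : ∀ α > 0, IntegrableOn (k α) (Icc a b))
    (hone : ∀ᵐ t ∂volume.restrict (Icc a b), convOp a (k 1) 1 t = t - a)
    (hindex : ∀ α > 0, ∀ β > 0, EqModExp (b - a)
      (truncLaplace a b (k α) * truncLaplace a b (k β)) (truncLaplace a b (k (α + β))))
    (hcont : ∀ α > 0, Tendsto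
      (fun β => ∫ t in Icc a b, |convOp a (k β) 1 t - convOp a (k α) 1 t|) (𝓝 α) (𝓝 0))
    {α : ℝ} (hα : 0 < α) : ∀ᵐ t ∂volume.restrict (Icc a b), k α t = rlKernel a α t := by
  have one_integrable : IntegrableOn (1 : ℝ → ℝ) (Icc a b) := continuous_one.integrableOn_Icc
  have kernel_one : ∀ᵐ t ∂volume.restrict (Icc a b), k 1 t = rlKernel a 1 t := by
    refine ae_eq_of_convOp_one_ae_eq hab.le (hk 1 one_pos) (integrableOn_rlKernel a b one_pos) ?_
    filter_upwards [hone] with t ht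
    rw [ht, ← RL_eq_convOp, RL_one one_pos, Real.rpow_one, one_add_one_eq_two, Real.Gamma_two,
      div_one]
  obtain ⟨d, hd, hdα⟩ := exists_seq_tendsto_of_half_of_add
    (P := fun α => EqModExp (b - a) (truncLaplace a b (k α)) fun x => x ^ (-α))
    (by simpa only [truncLaplace_congr_ae kernel_one] using truncLaplace_rlKernel hab.le one_pos)
    (fun α hα => eqModExp_rpow_of_add_self (sub_pos.2 hab) hα hindex)
    (fun α hα β hβ => eqModExp_rpow_add_of_mul (K := fun α => truncLaplace a b (k α))
      (subexponential_truncLaplace (hk β hβ)) (hindex α hα β hβ)) hα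
  have convOp_one_eq : ∀ n, ∀ᵐ t ∂volume.restrict (Icc a b),
      convOp a (k (d n)) 1 t = RL a (d n) 1 t := by
    intro n
    have kernel_eq := ae_eq_of_eqModExp_truncLaplace (hk _ (hd n).1)
      (integrableOn_rlKernel a b (hd n).1)
      ((hd n).2.trans (truncLaplace_rlKernel hab.le (hd n).1).symm)
    filter_upwards [ae_restrict_mem measurableSet_Icc] with t ht
    rw [RL_eq_convOp, convOp_congr_ae kernel_eq ht]
  refine ae_eq_of_convOp_one_ae_eq hab.le (hk α hα) (integrableOn_rlKernel a b hα) ?_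
  rw [← RL_eq_convOp]
  refine ae_eq_of_tendsto_integral_abs_sub
    (fun n => integrableOn_convOp (hk _ (hd n).1) one_integrable)
    (integrableOn_convOp (hk α hα) one_integrable) ((hcont α hα).comp hdα) ?_
  filter_upwards [ae_all_iff.2 convOp_one_eq] with t ht
  simpa only [ht, Function.comp_def] using (tendsto_RL_one a t hα).comp hdα

end IndexLaw

lemma tendsto_integral_abs_sub_of_uniform_on_unit_ball {Ω : Type*} [MeasurableSpace Ω]
    {μ : Measure Ω} {J : ℝ → (Ω → ℝ) → Ω → ℝ} {α : ℝ} {f : Ω → ℝ} (hα : 0 < α)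
    (hcont : ∀ ε > 0, ∃ δ > 0, ∀ β > 0, |β - α| < δ → ∀ f : Ω → ℝ, Integrable f μ →
      (∫ ω, |f ω| ∂μ) ≤ 1 → (∫ ω, |J β f ω - J α f ω| ∂μ) ≤ ε)
    (hsmul : ∀ β > 0, ∀ c : ℝ, ∀ᵐ ω ∂μ, J β (c • f) ω = c * J β f ω) (hf : Integrable f μ) :
    Tendsto (fun β => ∫ ω, |J β f ω - J α f ω| ∂μ) (𝓝 α) (𝓝 0) := by
  set N := (∫ ω, |f ω| ∂μ) + 1
  have N_pos : 0 < N := add_pos_of_nonneg_of_pos (integral_nonneg fun _ => abs_nonneg _) one_pos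
  have integral_smul : ∀ β > 0, ∫ ω, |J β (N⁻¹ • f) ω - J α (N⁻¹ • f) ω| ∂μ =
      N⁻¹ * ∫ ω, |J β f ω - J α f ω| ∂μ := by
    intro β hβ
    rw [← integral_const_mul]
    refine integral_congr_ae ?_
    filter_upwards [hsmul β hβ N⁻¹, hsmul α hα N⁻¹] with ω hβω hαω
    rw [hβω, hαω, ← mul_sub, abs_mul, abs_of_pos (inv_pos.2 N_pos)]
  have smul_le_one : ∫ ω, |(N⁻¹ • f) ω| ∂μ ≤ 1 := by
    simp only [Pi.smul_apply, smul_eq_mul, abs_mul, abs_of_pos (inv_pos.2 N_pos),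
      integral_const_mul]
    exact (inv_mul_le_one₀ N_pos).2 (lt_add_one _).le
  refine Metric.tendsto_nhds.2 fun ε hε => ?_
  obtain ⟨δ, hδ, hclose⟩ := hcont (N⁻¹ * (ε / 2)) (by positivity)
  filter_upwards [Metric.ball_mem_nhds α hδ, eventually_gt_nhds hα] with β hβδ hβ
  have := hclose β hβ hβδ _ (hf.smul _) smul_le_one
  rw [integral_smul β hβ] at this
  rw [dist_zero_right, Real.norm_of_nonneg (integral_nonneg fun _ => abs_nonneg _)]
  linarith [le_of_mul_le_mul_left this (inv_pos.2 N_pos)]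

lemma convOp_smul (a c : ℝ) (k f : ℝ → ℝ) : convOp a k (c • f) = c • convOp a k f := by
  ext t
  simp only [convOp, Pi.smul_apply, smul_eq_mul, mul_left_comm _ c,
    intervalIntegral.integral_const_mul]

lemma tendsto_integral_abs_sub_of_convolution {a b α : ℝ} {J : ℝ → (ℝ → ℝ) → ℝ → ℝ} {f : ℝ → ℝ}
    (hα : 0 < α)
    (hcont : ∀ ε > 0, ∃ δ > 0, ∀ β > 0, |β - α| < δ → ∀ f : ℝ → ℝ, IntegrableOn f (Icc a b) →
      (∫ t in Icc a b, |f t|) ≤ 1 → (∫ t in Icc a b, |J β f t - J α f t|) ≤ ε)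
    (hconv : ∀ β > 0, ∃ k : ℝ → ℝ, ∀ f : ℝ → ℝ, IntegrableOn f (Icc a b) →
      ∀ᵐ t ∂volume.restrict (Icc a b), J β f t = convOp a k f t)
    (hf : IntegrableOn f (Icc a b)) :
    Tendsto (fun β => ∫ t in Icc a b, |J β f t - J α f t|) (𝓝 α) (𝓝 0) := by
  refine tendsto_integral_abs_sub_of_uniform_on_unit_ball hα hcont (fun β hβ c => ?_) hf
  obtain ⟨k, hJ⟩ := hconv β hβ
  filter_upwards [hJ _ (hf.smul c), hJ f hf] with t hcf hft
  rw [hcf, hft, convOp_smul, Pi.smul_apply, smul_eq_mul]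

theorem cartwright_mcmullen_convolution_general {a b : ℝ} (hab : a < b)
    {J : ℝ → (ℝ → ℝ) → ℝ → ℝ}
    (hone : ∀ᵐ t ∂volume.restrict (Icc a b), J 1 1 t = t - a)
    (hindex : ∀ α > 0, ∀ β > 0, ∀ᵐ t ∂volume.restrict (Icc a b), J α (J β 1) t = J (α + β) 1 t)
    (hcont : ∀ α > 0,
      Tendsto (fun β => ∫ t in Icc a b, |J β 1 t - J α 1 t|) (𝓝 α) (𝓝 0))
    (hconv : ∀ α > 0, ∃ k : ℝ → ℝ, IntegrableOn k (Icc a b) ∧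
      ∀ f : ℝ → ℝ, IntegrableOn f (Icc a b) →
        ∀ᵐ t ∂volume.restrict (Icc a b), J α f t = convOp a k f t) :
    ∀ α > 0, ∀ f : ℝ → ℝ, IntegrableOn f (Icc a b) →
      ∀ᵐ t ∂volume.restrict (Icc a b), J α f t = RL a α f t := by
  choose! k hk hJ using hconv
  have one_integrable : IntegrableOn (1 : ℝ → ℝ) (Icc a b) := continuous_one.integrableOn_Icc
  have J_one : ∀ α > 0, ∀ᵐ t ∂volume.restrict (Icc a b), J α 1 t = convOp a (k α) 1 t :=
    fun α hα => hJ α hα 1 one_integrable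
  have J_one_integrable : ∀ α > 0, IntegrableOn (J α 1) (Icc a b) := fun α hα =>
    (integrableOn_convOp (hk α hα) one_integrable).congr ((J_one α hα).mono fun _ => Eq.symm)
  intro α hα f hf
  have kernel_eq : ∀ᵐ t ∂volume.restrict (Icc a b), k α t = rlKernel a α t := by
    refine ae_eq_rlKernel_of_index_law hab hk ?_ (fun α hα β hβ => ?_) (fun α hα => ?_) hα
    · filter_upwards [hone, J_one 1 one_pos] with t h h' using h'.symm.trans h
    · refine truncLaplace_mul_of_convOp_convOp_one hab.le (hk α hα) (hk β hβ)
        (hk _ (add_pos hα hβ)) (J_one β hβ) ?_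
      filter_upwards [hindex α hα β hβ, hJ α hα _ (J_one_integrable β hβ),
        J_one _ (add_pos hα hβ)] with t h h' h''
      rw [← h', h, h'']
    · refine (hcont α hα).congr' ?_
      filter_upwards [eventually_gt_nhds hα] with β hβ
      refine integral_congr_ae ?_
      filter_upwards [J_one α hα, J_one β hβ] with t hαt hβt
      rw [hαt, hβt]
  filter_upwards [hJ α hα f hf, ae_restrict_mem measurableSet_Icc] with t hJt ht
  rw [hJt, convOp_congr_ae kernel_eq ht, RL_eq_convOp]

/-- Cartwright–McMullen theorem (real, convolution-operator case): a family `(J^α)_{α>0}`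
of (bounded linear) convolution operators on `L¹[a,b]` that interpolates the ordinary
integral at `α = 1`, satisfies the index law, and depends continuously (in operator norm)
on `α`, must be the Riemann–Liouville family. -/
theorem cartwright_mcmullen_convolution (a b : ℝ) (hab : a < b)
    (J : ℝ → (ℝ → ℝ) → (ℝ → ℝ))
    -- each J^α maps L¹ to L¹
    (hmap : ∀ α > 0, ∀ f : ℝ → ℝ, IntegrableOn f (Icc a b) →
      IntegrableOn (J α f) (Icc a b))
    -- (1) interpolation: J¹ is the ordinary integral operator
    (hone : ∀ f : ℝ → ℝ, IntegrableOn f (Icc a b) →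
      ∀ᵐ t ∂(volume.restrict (Icc a b)), J 1 f t = ∫ s in a..t, f s)
    -- (2) index law
    (hindex : ∀ α > 0, ∀ β > 0, ∀ f : ℝ → ℝ, IntegrableOn f (Icc a b) →
      ∀ᵐ t ∂(volume.restrict (Icc a b)), J α (J β f) t = J (α + β) f t)
    -- (3) operator-norm continuity in α
    (hcont : ∀ α > 0, ∀ ε > 0, ∃ δ > 0, ∀ β > 0, |β - α| < δ →
      ∀ f : ℝ → ℝ, IntegrableOn f (Icc a b) → (∫ t in Icc a b, |f t|) ≤ 1 →
        (∫ t in Icc a b, |J β f t - J α f t|) ≤ ε)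
    -- (4) each J^α is a convolution operator with some L¹ kernel
    (hconv : ∀ α > 0, ∃ k : ℝ → ℝ, IntegrableOn k (Icc a b) ∧
      ∀ f : ℝ → ℝ, IntegrableOn f (Icc a b) →
        ∀ᵐ t ∂(volume.restrict (Icc a b)), J α f t = convOp a k f t) :
    ∀ α > 0, ∀ f : ℝ → ℝ, IntegrableOn f (Icc a b) →
      ∀ᵐ t ∂(volume.restrict (Icc a b)), J α f t = RL a α f t := by
  have one_int : IntegrableOn (1 : ℝ → ℝ) (Icc a b) := continuous_one.integrableOn_Icc
  exact cartwright_mcmullen_convolution_general hab (by simpa using hone 1 one_int)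
    (fun α hα β hβ => hindex α hα β hβ 1 one_int)
    (fun α hα => tendsto_integral_abs_sub_of_convolution hα (hcont α hα)
      (fun β hβ => (hconv β hβ).imp fun _ hk => hk.2) one_int) hconv
end
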